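/- There exists a constant c_p > 0 depending only on p such that if ψ̂(0) ≥ c_p·‖ψ‖₂, then for every l ∈ ℕ there is a constant M_{p,l} > 0 (depending only on p, l and ψ) such that ‖k(·,t) − k̂(0,t)‖_{C^l[0,2π]} ≤ M_{p,l}·(T−t)^{(3p−2)/(p+1)} for all t ∈ [0,T), where k̂(0,t) is regarded as a constant function of θ. -/

import Mathlib

open Real MeasureTheory Filter Set

/-- The `n`-th Fourier coefficient of a `2π`-periodic function `f : ℝ → ℝ`:
`f̂(n) = (1/2π) ∫₀^{2π} f(θ) e^{-inθ} dθ`. -/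
noncomputable def fCoeff (f : ℝ → ℝ) (n : ℤ) : ℂ :=
  (1 / (2 * Real.pi)) * ∫ θ in (0:ℝ)..(2 * Real.pi),
    (f θ : ℂ) * Complex.exp (-(Complex.I * n * θ))

/-- The seminorm `‖f‖₂ = max{sup_n n²|Re f̂(n)|, sup_n n²|Im f̂(n)|}`. -/
noncomputable def seminorm2 (f : ℝ → ℝ) : ℝ :=
  max (⨆ n : ℤ, (n : ℝ)^2 * |(fCoeff f n).re|)
      (⨆ n : ℤ, (n : ℝ)^2 * |(fCoeff f n).im|)

/-- The `C^l[0,2π]` norm: `max_{0 ≤ j ≤ l} sup_{θ ∈ [0,2π]} |f^{(j)}(θ)|`. -/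
noncomputable def ClNorm (l : ℕ) (f : ℝ → ℝ) : ℝ :=
  ⨆ j : Fin (l + 1), ⨆ θ : Set.Icc (0:ℝ) (2 * Real.pi),
    |iteratedDeriv (j : ℕ) f (θ : ℝ)|

/-- `k : ℝ × [0,T) → ℝ` is a smooth, `2π`-periodic (in space), strictly positive solution of the
`p`-curve shortening equation
`∂k/∂t = k²(k^{p-1} ∂²k/∂θ² + (p-1) k^{p-2} (∂k/∂θ)² + (1/p) k^p)`
with initial datum `ψ` (smooth, strictly positive, `2π`-periodic), blow-up time `T`
(i.e. `sup_θ k(θ,t) → ∞` as `t → T⁻`), such that `k(·,t)` is the curvature of a simple closed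
convex curve for each `t`, i.e. `∫₀^{2π} e^{iθ}/k(θ,t) dθ = 0`. -/
def IsPCSF (p : ℕ) (T : ℝ) (k : ℝ → ℝ → ℝ) (ψ : ℝ → ℝ) : Prop :=
  ContDiffOn ℝ (⊤ : ℕ∞) (fun q : ℝ × ℝ => k q.1 q.2) (Set.univ ×ˢ Set.Ico 0 T) ∧
  (∀ θ t, k (θ + 2 * Real.pi) t = k θ t) ∧
  (∀ θ : ℝ, ∀ t ∈ Set.Ico (0:ℝ) T, 0 < k θ t) ∧
  (∀ θ : ℝ, ∀ t ∈ Set.Ico (0:ℝ) T,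
    HasDerivAt (fun s => k θ s)
      ((k θ t)^2 * ((k θ t)^(p - 1) * deriv (deriv (fun x => k x t)) θ
        + ((p : ℝ) - 1) * (k θ t)^(p - 2) * (deriv (fun x => k x t) θ)^2
        + (1 / (p : ℝ)) * (k θ t)^p)) t) ∧
  (∀ θ, k θ 0 = ψ θ) ∧
  ContDiff ℝ (⊤ : ℕ∞) ψ ∧ (∀ θ, 0 < ψ θ) ∧ (∀ θ, ψ (θ + 2 * Real.pi) = ψ θ) ∧
  Filter.Tendsto (fun t => ⨆ θ : Set.Icc (0:ℝ) (2 * Real.pi), k (θ : ℝ) t)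
    (nhdsWithin T (Set.Iio T)) Filter.atTop ∧
  (∀ t ∈ Set.Ico (0:ℝ) T,
    (∫ θ in (0:ℝ)..(2 * Real.pi), Complex.exp (Complex.I * θ) / (k θ t)) = 0)

/-- The original time `t` corresponding to the rescaled time `τ`:
`t = T(1 - e^{-(p+1)τ})`, i.e. `τ = -(1/(p+1))·log(1 - t/T)`. -/
noncomputable def tOf (p : ℕ) (T τ : ℝ) : ℝ := T * (1 - Real.exp (-((p : ℝ) + 1) * τ))

/-- The normalized curvature `k̃(θ,τ) = ((p+1)/p)^{1/(p+1)} (T-t)^{1/(p+1)} k(θ,t)`,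
with `t = T(1 - e^{-(p+1)τ})`. -/
noncomputable def ktilde (p : ℕ) (T : ℝ) (k : ℝ → ℝ → ℝ) (θ τ : ℝ) : ℝ :=
  (((p : ℝ) + 1) / (p : ℝ)) ^ ((1 : ℝ) / ((p : ℝ) + 1))
    * (T - tOf p T τ) ^ ((1 : ℝ) / ((p : ℝ) + 1)) * k θ (tOf p T τ)

/-!
Write `r = 1 / k = ρ (1 + ε)`, where `ρ` is the mean of the radius of curvature. In these variables
the flow is `∂r/∂t = -(1/p) ((k ^ p)'' + k ^ p)`, and with `(ρ k) ^ p = 1 - p ε + q` the `n`-th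
Fourier mode of `r` satisfies
`d r̂(n)/dt = -(n² - 1) ρ ^ (-(p + 1)) r̂(n) + (n² - 1) / p · ρ ^ (-p) q̂(n)`,
while `dρ/dt = -(1/p) ρ ^ (-p) (1 + q̂(0))`. The modes `n = ±1` vanish because the curve is closed,
so every remaining mode is damped at least at the rate `3 ρ ^ (-(p + 1))`, which is the rate at
which `ρ ^ (3 p)` decreases.

The nonlinear part `q` is quadratic in `ε` in the norms `sup ⟨n⟩ ^ m |f̂(n)|`. If `ε` is small
initially, half of this damping already gives `ρ ε = O(ρ ²)`, which keeps `ε` small and yields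
`ε = O(ρ)`. Then `q` is a relative perturbation of size `O(ρ)`, harmless for the weight
`ρ ^ (3 p) exp (-A ρ)`, and `ρ ε = O(ρ ^ (3 p))` follows in every norm. Finally
`k - k̂(0) = O(ρ⁻¹ ε) = O(ρ ^ (3 p - 2))`, and `ρ ^ (p + 1) = O(T - t)`.
-/

open scoped Topology ContDiff

/-! ### Fourier coefficients of smooth periodic functions -/

/-- Smooth `2π`-periodic functions on the line, i.e. smooth functions on the circle. -/
structure SmoothPeriodic (f : ℝ → ℝ) : Prop where
  contDiff : ContDiff ℝ ∞ f
  periodic : Function.Periodic f (2 * π)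

namespace SmoothPeriodic

variable {f g : ℝ → ℝ}

protected lemma continuous (hf : SmoothPeriodic f) : Continuous f := hf.contDiff.continuous

protected lemma const (c : ℝ) : SmoothPeriodic fun _ => c := ⟨contDiff_const, fun _ => rfl⟩

protected lemma add (hf : SmoothPeriodic f) (hg : SmoothPeriodic g) :
    SmoothPeriodic fun θ => f θ + g θ :=
  ⟨hf.contDiff.add hg.contDiff, hf.periodic.add hg.periodic⟩

protected lemma sub (hf : SmoothPeriodic f) (hg : SmoothPeriodic g) :
    SmoothPeriodic fun θ => f θ - g θ :=
  ⟨hf.contDiff.sub hg.contDiff, hf.periodic.sub hg.periodic⟩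

protected lemma mul (hf : SmoothPeriodic f) (hg : SmoothPeriodic g) :
    SmoothPeriodic fun θ => f θ * g θ :=
  ⟨hf.contDiff.mul hg.contDiff, hf.periodic.mul hg.periodic⟩

protected lemma const_mul (hf : SmoothPeriodic f) (c : ℝ) : SmoothPeriodic fun θ => c * f θ :=
  (SmoothPeriodic.const c).mul hf

protected lemma pow (hf : SmoothPeriodic f) (p : ℕ) : SmoothPeriodic fun θ => f θ ^ p :=
  ⟨hf.contDiff.pow p, hf.periodic.comp (· ^ p)⟩

protected lemma inv (hf : SmoothPeriodic f) (hf0 : ∀ θ, f θ ≠ 0) :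
    SmoothPeriodic fun θ => (f θ)⁻¹ :=
  ⟨hf.contDiff.inv hf0, hf.periodic.comp (·⁻¹)⟩

protected lemma deriv (hf : SmoothPeriodic f) : SmoothPeriodic (deriv f) where
  contDiff := by simpa using ContDiff.iterate_deriv 1 hf.contDiff
  periodic θ := by rw [← deriv_comp_add_const, funext hf.periodic]

protected lemma iteratedDeriv (hf : SmoothPeriodic f) :
    ∀ j : ℕ, SmoothPeriodic (iteratedDeriv j f)
  | 0 => by simpa using hf
  | j + 1 => by simpa only [iteratedDeriv_succ] using (hf.iteratedDeriv j).deriv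

protected lemma hasDerivAt (hf : SmoothPeriodic f) (θ : ℝ) : HasDerivAt f (deriv f θ) θ :=
  (hf.contDiff.differentiable (by simp) θ).hasDerivAt

lemma exists_abs_le (hf : SmoothPeriodic f) : ∃ C, ∀ θ ∈ Icc 0 (2 * π), |f θ| ≤ C :=
  isCompact_Icc.exists_bound_of_continuousOn hf.continuous.continuousOn

end SmoothPeriodic

section FourierCoefficients

variable {f g : ℝ → ℝ}

lemma norm_exp_I_mul_int_mul (n : ℤ) (θ : ℝ) : ‖Complex.exp (Complex.I * n * θ)‖ = 1 := by
  rw [Complex.norm_exp]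
  simp

lemma norm_exp_neg_I_mul_int_mul (n : ℤ) (θ : ℝ) :
    ‖Complex.exp (-(Complex.I * n * θ))‖ = 1 := by
  simpa using norm_exp_I_mul_int_mul (-n) θ

lemma intervalIntegrable_mul_exp (hf : Continuous f) (n : ℤ) (a b : ℝ) :
    IntervalIntegrable (fun θ : ℝ => (f θ : ℂ) * Complex.exp (-(Complex.I * n * θ)))
      volume a b :=
  Continuous.intervalIntegrable (by fun_prop) _ _

lemma fCoeff_add (hf : Continuous f) (hg : Continuous g) (n : ℤ) :
    fCoeff (fun θ => f θ + g θ) n = fCoeff f n + fCoeff g n := by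
  unfold fCoeff
  rw [← mul_add, ← intervalIntegral.integral_add (intervalIntegrable_mul_exp hf n _ _)
    (intervalIntegrable_mul_exp hg n _ _)]
  simp only [Complex.ofReal_add, add_mul]

lemma fCoeff_const_mul (c : ℝ) (f : ℝ → ℝ) (n : ℤ) :
    fCoeff (fun θ => c * f θ) n = c * fCoeff f n := by
  unfold fCoeff
  rw [mul_left_comm, ← intervalIntegral.integral_const_mul (c : ℂ)]
  simp only [Complex.ofReal_mul, mul_assoc]

lemma fCoeff_sub (hf : Continuous f) (hg : Continuous g) (n : ℤ) :
    fCoeff (fun θ => f θ - g θ) n = fCoeff f n - fCoeff g n := by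
  have hneg : fCoeff (fun θ => -g θ) n = -fCoeff g n := by
    simpa using fCoeff_const_mul (-1) g n
  simpa only [← sub_eq_add_neg, hneg] using fCoeff_add hf hg.fun_neg n

lemma fCoeff_neg (f : ℝ → ℝ) (n : ℤ) : fCoeff f (-n) = starRingEnd ℂ (fCoeff f n) := by
  unfold fCoeff
  simp only [intervalIntegral.integral_of_le two_pi_pos.le, map_mul, map_div₀, map_one, map_ofNat,
    Complex.conj_ofReal, ← integral_conj, ← Complex.exp_conj, map_neg, Complex.conj_I,
    map_intCast, Int.cast_neg, mul_neg, neg_mul]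

lemma norm_fCoeff_le {C : ℝ} (h : ∀ θ ∈ Icc 0 (2 * π), |f θ| ≤ C) (n : ℤ) :
    ‖fCoeff f n‖ ≤ C := by
  have hint : ‖∫ θ in (0 : ℝ)..(2 * π), (f θ : ℂ) * Complex.exp (-(Complex.I * n * θ))‖
      ≤ C * |2 * π - 0| := by
    refine intervalIntegral.norm_integral_le_of_norm_le_const fun θ hθ => ?_
    rw [uIoc_of_le two_pi_pos.le] at hθ
    rw [norm_mul, norm_exp_neg_I_mul_int_mul, mul_one, Complex.norm_real]
    exact h θ ⟨hθ.1.le, hθ.2⟩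
  rw [sub_zero, abs_of_pos two_pi_pos] at hint
  have hnorm : ‖(1 / (2 * (π : ℂ)))‖ = (2 * π)⁻¹ := by
    simp [abs_of_pos pi_pos]
  rw [fCoeff, norm_mul, hnorm, inv_mul_le_iff₀ two_pi_pos]
  linarith

lemma exp_neg_I_mul_int_mul_two_pi (n : ℤ) :
    Complex.exp (-(Complex.I * n * (2 * π : ℝ))) = 1 := by
  rw [← Complex.exp_int_mul_two_pi_mul_I (-n)]
  push_cast
  ring_nf

lemma SmoothPeriodic.fCoeff_deriv (hf : SmoothPeriodic f) (n : ℤ) :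
    fCoeff (deriv f) n = Complex.I * n * fCoeff f n := by
  have hexp (θ : ℝ) : HasDerivAt (fun x : ℝ => Complex.exp (-(Complex.I * n * x)))
      (Complex.exp (-(Complex.I * n * θ)) * -(Complex.I * n)) θ := by
    simpa using ((hasDerivAt_id (θ : ℂ)).const_mul (Complex.I * n)).neg.cexp.comp_ofReal
  have hf' := hf.deriv.continuous
  have hparts := intervalIntegral.integral_mul_deriv_eq_deriv_mul (a := 0) (b := 2 * π)
    (fun θ _ => hexp θ) (fun θ _ => (hf.hasDerivAt θ).ofReal_comp)
    (Continuous.intervalIntegrable (by fun_prop) _ _)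
    (Continuous.intervalIntegrable (by fun_prop) _ _)
  have hper : f (2 * π) = f 0 := by simpa using hf.periodic 0
  rw [exp_neg_I_mul_int_mul_two_pi, hper] at hparts
  simp only [Complex.ofReal_zero, mul_zero, neg_zero, Complex.exp_zero, sub_self, zero_sub,
    ← intervalIntegral.integral_neg] at hparts
  unfold fCoeff
  rw [mul_left_comm (Complex.I * (n : ℂ)),
    ← intervalIntegral.integral_const_mul (Complex.I * (n : ℂ))]
  congr 1
  calc ∫ θ in (0 : ℝ)..(2 * π), ((deriv f θ : ℝ) : ℂ) * Complex.exp (-(Complex.I * n * θ))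
      = ∫ θ in (0 : ℝ)..(2 * π), Complex.exp (-(Complex.I * n * θ)) * ((deriv f θ : ℝ) : ℂ) := by
        simp only [mul_comm]
    _ = ∫ θ in (0 : ℝ)..(2 * π),
          Complex.I * n * ((f θ : ℂ) * Complex.exp (-(Complex.I * n * θ))) := by
        rw [hparts]
        exact intervalIntegral.integral_congr fun θ _ => by ring

lemma SmoothPeriodic.fCoeff_iteratedDeriv (hf : SmoothPeriodic f) (n : ℤ) :
    ∀ j : ℕ, fCoeff (iteratedDeriv j f) n = (Complex.I * n) ^ j * fCoeff f n
  | 0 => by simp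
  | j + 1 => by
    rw [iteratedDeriv_succ, (hf.iteratedDeriv j).fCoeff_deriv, hf.fCoeff_iteratedDeriv n j,
      pow_succ]
    ring

lemma SmoothPeriodic.norm_fCoeff_iteratedDeriv (hf : SmoothPeriodic f) (j : ℕ) (n : ℤ) :
    ‖fCoeff (iteratedDeriv j f) n‖ = |(n : ℝ)| ^ j * ‖fCoeff f n‖ := by
  simp [hf.fCoeff_iteratedDeriv]

lemma fCoeff_const (c : ℝ) (n : ℤ) : fCoeff (fun _ => c) n = if n = 0 then (c : ℂ) else 0 := by
  split_ifs with hn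
  · subst hn
    have : (π : ℂ) ≠ 0 := by exact_mod_cast pi_ne_zero
    simp only [fCoeff, Int.cast_zero, mul_zero, zero_mul, neg_zero, Complex.exp_zero, mul_one,
      intervalIntegral.integral_const, Complex.real_smul]
    push_cast
    field_simp
    simp
  · have hderiv := (SmoothPeriodic.const c).fCoeff_deriv n
    have hzero : fCoeff (deriv fun _ => c) n = 0 := by simp [fCoeff]
    rw [hzero, eq_comm, mul_eq_zero] at hderiv
    exact hderiv.resolve_left (by simp [hn])

/-- The mean value of `f` over the circle. -/
noncomputable def circleMean (f : ℝ → ℝ) : ℝ := (fCoeff f 0).re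

lemma fCoeff_zero (f : ℝ → ℝ) : fCoeff f 0 = circleMean f :=
  (Complex.conj_eq_iff_re.1 (by rw [← fCoeff_neg, neg_zero])).symm

lemma fCoeff_sub_circleMean (hf : Continuous f) (n : ℤ) :
    fCoeff (fun θ => f θ - circleMean f) n = if n = 0 then 0 else fCoeff f n := by
  rw [fCoeff_sub hf continuous_const, fCoeff_const]
  split_ifs with hn
  · rw [hn, fCoeff_zero, sub_self]
  · rw [sub_zero]

lemma circleMean_eq_integral (f : ℝ → ℝ) :
    circleMean f = (2 * π)⁻¹ * ∫ θ in (0 : ℝ)..(2 * π), f θ := by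
  have : fCoeff f 0 = (((2 * π)⁻¹ * ∫ θ in (0 : ℝ)..(2 * π), f θ : ℝ) : ℂ) := by
    simp [fCoeff, intervalIntegral.integral_ofReal]
  rw [circleMean, this, Complex.ofReal_re]

lemma circleMean_pos (hf : Continuous f) (hpos : ∀ θ, 0 < f θ) : 0 < circleMean f := by
  rw [circleMean_eq_integral]
  have := intervalIntegral.intervalIntegral_pos_of_pos (hf.intervalIntegrable 0 (2 * π)) hpos
    two_pi_pos
  positivity

end FourierCoefficients

/-! ### Weighted Fourier norms -/

/-- The frequency weight `⟨n⟩ = max(1, |n|)`. -/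
noncomputable def bracket (n : ℤ) : ℝ := max 1 |(n : ℝ)|

section Bracket

lemma one_le_bracket (n : ℤ) : 1 ≤ bracket n := le_max_left _ _

lemma bracket_pos (n : ℤ) : 0 < bracket n := one_pos.trans_le (one_le_bracket n)

lemma abs_le_bracket (n : ℤ) : |(n : ℝ)| ≤ bracket n := le_max_right _ _

@[simp] lemma bracket_zero : bracket 0 = 1 := by simp [bracket]

lemma bracket_of_ne_zero {n : ℤ} (hn : n ≠ 0) : bracket n = |(n : ℝ)| :=
  max_eq_right (by exact_mod_cast Int.one_le_abs hn)

lemma bracket_le_two_mul_or (n j : ℤ) : bracket n ≤ 2 * bracket (n - j) ∨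
    bracket n ≤ 2 * bracket j := by
  have hadd : bracket n ≤ bracket (n - j) + bracket j := by
    refine max_le (by linarith [one_le_bracket (n - j), one_le_bracket j]) ?_
    calc |(n : ℝ)| = |((n - j : ℤ) : ℝ) + j| := by push_cast; rw [sub_add_cancel]
      _ ≤ _ := (abs_add_le _ _).trans (add_le_add (abs_le_bracket _) (abs_le_bracket _))
  by_contra! h
  linarith

lemma inv_bracket_pow_le {n i : ℤ} (h : bracket n ≤ 2 * bracket i) (m : ℕ) :
    (bracket i ^ m)⁻¹ ≤ 2 ^ m * (bracket n ^ m)⁻¹ := by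
  have hn := bracket_pos n
  have hi := bracket_pos i
  have hpow := pow_le_pow_left₀ hn.le h m
  rw [mul_pow] at hpow
  rw [← div_eq_mul_inv, le_div_iff₀ (by positivity), inv_mul_le_iff₀ (by positivity)]
  linarith

lemma summable_inv_bracket_sq : Summable fun n : ℤ => (bracket n ^ 2)⁻¹ := by
  have hsq : Summable fun n : ℤ => 1 / (n : ℝ) ^ 2 :=
    (Real.summable_one_div_int_pow (p := 2)).2 (by norm_num)
  refine (hsq.add (hasSum_ite_eq (0 : ℤ) (1 : ℝ)).summable).of_nonneg_of_le
    (fun n => by have := bracket_pos n; positivity) fun n => ?_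
  by_cases hn : n = 0
  · simp [hn]
  · simp [bracket_of_ne_zero hn, hn]

/-- `∑ₙ ⟨n⟩⁻²`, the constant of the embedding into bounded functions. -/
noncomputable def bracketSum : ℝ := ∑' n : ℤ, (bracket n ^ 2)⁻¹

lemma one_le_bracketSum : 1 ≤ bracketSum := by
  simpa [bracketSum] using
    summable_inv_bracket_sq.le_tsum 0 fun n _ => by have := bracket_pos n; positivity

lemma hasSum_inv_bracket_sq : HasSum (fun n : ℤ => (bracket n ^ 2)⁻¹) bracketSum :=
  summable_inv_bracket_sq.hasSum

lemma hasSum_inv_bracket_sub_sq (n : ℤ) :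
    HasSum (fun j : ℤ => (bracket (n - j) ^ 2)⁻¹) bracketSum :=
  (Equiv.subLeft n).hasSum_iff.2 hasSum_inv_bracket_sq

end Bracket

/-- The norm `‖f‖_m = supₙ ⟨n⟩^m |f̂(n)|`; as a real supremum it is meaningful when the
coefficients decay fast enough, in particular for smooth periodic `f`. -/
noncomputable def fourierNorm (m : ℕ) (f : ℝ → ℝ) : ℝ := ⨆ n : ℤ, bracket n ^ m * ‖fCoeff f n‖

section FourierNorm

variable {f g : ℝ → ℝ}

lemma fourierNorm_nonneg (m : ℕ) (f : ℝ → ℝ) : 0 ≤ fourierNorm m f :=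
  Real.iSup_nonneg fun n => by have := bracket_pos n; positivity

lemma fourierNorm_le {m : ℕ} {C : ℝ} (h : ∀ n, bracket n ^ m * ‖fCoeff f n‖ ≤ C) :
    fourierNorm m f ≤ C :=
  ciSup_le h

lemma SmoothPeriodic.bracket_pow_mul_le_of_abs_le (hf : SmoothPeriodic f) {m : ℕ} {C : ℝ}
    (h0 : ∀ θ ∈ Icc 0 (2 * π), |f θ| ≤ C)
    (hm : ∀ θ ∈ Icc 0 (2 * π), |iteratedDeriv m f θ| ≤ C) (n : ℤ) :
    bracket n ^ m * ‖fCoeff f n‖ ≤ C := by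
  by_cases hn : n = 0
  · simpa [hn] using norm_fCoeff_le h0 0
  · rw [bracket_of_ne_zero hn, ← hf.norm_fCoeff_iteratedDeriv]
    exact norm_fCoeff_le hm n

lemma SmoothPeriodic.bddAbove_fourierNorm (hf : SmoothPeriodic f) (m : ℕ) :
    BddAbove (range fun n : ℤ => bracket n ^ m * ‖fCoeff f n‖) := by
  obtain ⟨C₀, h₀⟩ := hf.exists_abs_le
  obtain ⟨C₁, h₁⟩ := (hf.iteratedDeriv m).exists_abs_le
  exact ⟨max C₀ C₁, forall_mem_range.2 <| hf.bracket_pow_mul_le_of_abs_le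
    (fun θ hθ => (h₀ θ hθ).trans (le_max_left _ _))
    (fun θ hθ => (h₁ θ hθ).trans (le_max_right _ _))⟩

lemma SmoothPeriodic.le_fourierNorm (hf : SmoothPeriodic f) (m : ℕ) (n : ℤ) :
    bracket n ^ m * ‖fCoeff f n‖ ≤ fourierNorm m f :=
  le_ciSup (hf.bddAbove_fourierNorm m) n

lemma SmoothPeriodic.norm_fCoeff_le_fourierNorm (hf : SmoothPeriodic f) (m : ℕ) (n : ℤ) :
    ‖fCoeff f n‖ ≤ fourierNorm m f :=
  (le_mul_of_one_le_left (norm_nonneg _) (one_le_pow₀ (one_le_bracket n))).trans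
    (hf.le_fourierNorm m n)

lemma SmoothPeriodic.norm_fCoeff_le_mul_inv (hf : SmoothPeriodic f) (m : ℕ) (n : ℤ) :
    ‖fCoeff f n‖ ≤ fourierNorm m f * (bracket n ^ m)⁻¹ := by
  have := bracket_pos n
  rw [← div_eq_mul_inv, le_div_iff₀ (by positivity), mul_comm]
  exact hf.le_fourierNorm m n

lemma SmoothPeriodic.fourierNorm_mono (hf : SmoothPeriodic f) {m m' : ℕ} (h : m ≤ m') :
    fourierNorm m f ≤ fourierNorm m' f :=
  fourierNorm_le fun n => (mul_le_mul_of_nonneg_right (pow_le_pow_right₀ (one_le_bracket n) h)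
    (norm_nonneg _)).trans (hf.le_fourierNorm m' n)

lemma SmoothPeriodic.fourierNorm_le_of_norm_fCoeff_le (hg : SmoothPeriodic g) {m : ℕ}
    (h : ∀ n, ‖fCoeff f n‖ ≤ ‖fCoeff g n‖) : fourierNorm m f ≤ fourierNorm m g :=
  fourierNorm_le fun n => (mul_le_mul_of_nonneg_left (h n)
    (pow_pos (bracket_pos n) m).le).trans (hg.le_fourierNorm m n)

lemma fourierNorm_add_le (hf : SmoothPeriodic f) (hg : SmoothPeriodic g) (m : ℕ) :
    fourierNorm m (fun θ => f θ + g θ) ≤ fourierNorm m f + fourierNorm m g := by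
  refine fourierNorm_le fun n => ?_
  have := bracket_pos n
  calc bracket n ^ m * ‖fCoeff (fun θ => f θ + g θ) n‖
      ≤ bracket n ^ m * (‖fCoeff f n‖ + ‖fCoeff g n‖) := by
        rw [fCoeff_add hf.continuous hg.continuous]
        gcongr
        exact norm_add_le _ _
    _ ≤ fourierNorm m f + fourierNorm m g := by
        rw [mul_add]
        exact add_le_add (hf.le_fourierNorm m n) (hg.le_fourierNorm m n)

lemma fourierNorm_const_mul (m : ℕ) (c : ℝ) (f : ℝ → ℝ) :
    fourierNorm m (fun θ => c * f θ) = |c| * fourierNorm m f := by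
  simp only [fourierNorm, Real.mul_iSup_of_nonneg (abs_nonneg c), fCoeff_const_mul, norm_mul,
    Complex.norm_real, Real.norm_eq_abs, mul_left_comm]

lemma fourierNorm_neg (m : ℕ) (f : ℝ → ℝ) :
    fourierNorm m (fun θ => -f θ) = fourierNorm m f := by
  simpa using fourierNorm_const_mul m (-1) f

lemma fourierNorm_sub_le (hf : SmoothPeriodic f) (hg : SmoothPeriodic g) (m : ℕ) :
    fourierNorm m (fun θ => f θ - g θ) ≤ fourierNorm m f + fourierNorm m g := by
  have hneg : SmoothPeriodic fun θ => -g θ := by simpa using hg.const_mul (-1)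
  simpa only [← sub_eq_add_neg, fourierNorm_neg] using fourierNorm_add_le hf hneg m

lemma abs_fourierNorm_sub_fourierNorm_le (hf : SmoothPeriodic f) (hg : SmoothPeriodic g) (m : ℕ) :
    |fourierNorm m f - fourierNorm m g| ≤ fourierNorm m (fun θ => f θ - g θ) := by
  have hfg := fourierNorm_add_le (hf.sub hg) hg m
  have hgf := fourierNorm_sub_le hf (hf.sub hg) m
  simp only [sub_add_cancel, sub_sub_cancel] at hfg hgf
  exact abs_sub_le_iff.2 ⟨by linarith, by linarith⟩

lemma fourierNorm_one_le (m : ℕ) : fourierNorm m (fun _ => 1) ≤ 1 := by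
  refine fourierNorm_le fun n => ?_
  by_cases hn : n = 0 <;> simp [fCoeff_const, hn]

end FourierNorm

/-! ### Fourier inversion and the tame product estimate -/

section Inversion

variable {f g : ℝ → ℝ}

local instance : Fact (0 < 2 * π) := ⟨two_pi_pos⟩

/-- A smooth periodic function viewed as a continuous complex function on `ℝ / 2πℤ`. -/
noncomputable def SmoothPeriodic.lift (hf : SmoothPeriodic f) : C(AddCircle (2 * π), ℂ) where
  toFun := (hf.periodic.comp ((↑) : ℝ → ℂ)).lift
  continuous_toFun := continuous_coinduced_dom.2 (Complex.continuous_ofReal.comp hf.continuous)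

lemma SmoothPeriodic.lift_coe (hf : SmoothPeriodic f) (θ : ℝ) :
    hf.lift (θ : AddCircle (2 * π)) = f θ := rfl

lemma fourier_coe_eq_exp (n : ℤ) (θ : ℝ) :
    fourier n (θ : AddCircle (2 * π)) = Complex.exp (Complex.I * n * θ) := by
  have hpi : (π : ℂ) ≠ 0 := by exact_mod_cast pi_ne_zero
  rw [fourier_coe_apply]
  push_cast
  field_simp

lemma SmoothPeriodic.fourierCoeff_lift (hf : SmoothPeriodic f) (n : ℤ) :
    fourierCoeff hf.lift n = fCoeff f n := by
  rw [fourierCoeff_eq_intervalIntegral _ n 0, zero_add, fCoeff, Complex.real_smul]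
  simp only [hf.lift_coe, fourier_coe_eq_exp, smul_eq_mul]
  push_cast
  simp only [mul_neg, mul_comm]

lemma SmoothPeriodic.summable_norm_fCoeff (hf : SmoothPeriodic f) :
    Summable fun n : ℤ => ‖fCoeff f n‖ :=
  (summable_inv_bracket_sq.mul_left _).of_nonneg_of_le (fun _ => norm_nonneg _)
    (hf.norm_fCoeff_le_mul_inv 2)

lemma SmoothPeriodic.hasSum_fCoeff_mul_exp (hf : SmoothPeriodic f) (θ : ℝ) :
    HasSum (fun n : ℤ => fCoeff f n * Complex.exp (Complex.I * n * θ)) (f θ : ℂ) := by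
  have hsum : Summable (fourierCoeff hf.lift) := by
    simpa only [funext hf.fourierCoeff_lift] using hf.summable_norm_fCoeff.of_norm
  simpa only [hf.fourierCoeff_lift, fourier_coe_eq_exp, smul_eq_mul, hf.lift_coe] using
    has_pointwise_sum_fourier_series_of_summable hsum (θ : AddCircle (2 * π))

lemma SmoothPeriodic.abs_le_fourierNorm (hf : SmoothPeriodic f) (θ : ℝ) :
    |f θ| ≤ bracketSum * fourierNorm 2 f := by
  have hbound : ‖(f θ : ℂ)‖ ≤ fourierNorm 2 f * bracketSum := by
    rw [← (hf.hasSum_fCoeff_mul_exp θ).tsum_eq]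
    refine tsum_of_norm_bounded (hasSum_inv_bracket_sq.mul_left _) fun n => ?_
    rw [norm_mul, norm_exp_I_mul_int_mul, mul_one]
    exact hf.norm_fCoeff_le_mul_inv 2 n
  rwa [Complex.norm_real, mul_comm] at hbound

lemma SmoothPeriodic.fourierNorm_iteratedDeriv_le (hf : SmoothPeriodic f) (j m : ℕ) :
    fourierNorm m (iteratedDeriv j f) ≤ fourierNorm (m + j) f := by
  refine fourierNorm_le fun n => le_trans ?_ (hf.le_fourierNorm (m + j) n)
  have := bracket_pos n
  rw [hf.norm_fCoeff_iteratedDeriv, pow_add, mul_assoc]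
  gcongr
  exact abs_le_bracket n

lemma SmoothPeriodic.ClNorm_le_fourierNorm (hf : SmoothPeriodic f) (l : ℕ) :
    ClNorm l f ≤ bracketSum * fourierNorm (2 + l) f := by
  have hS := zero_le_one.trans one_le_bracketSum
  have : Nonempty (Icc (0 : ℝ) (2 * π)) := ⟨⟨0, left_mem_Icc.2 two_pi_pos.le⟩⟩
  refine ciSup_le fun j => ciSup_le fun θ => ?_
  refine ((hf.iteratedDeriv j).abs_le_fourierNorm θ).trans (mul_le_mul_of_nonneg_left ?_ hS)
  exact (hf.fourierNorm_iteratedDeriv_le j 2).trans (hf.fourierNorm_mono (by omega))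

lemma SmoothPeriodic.hasSum_mul_exp_mul_fCoeff (hg : SmoothPeriodic g) (c : ℝ) (n : ℤ) (θ : ℝ) :
    HasSum (fun j : ℤ => c * Complex.exp (-(Complex.I * ((n - j : ℤ) : ℂ) * θ)) * fCoeff g j)
      (((c * g θ : ℝ) : ℂ) * Complex.exp (-(Complex.I * n * θ))) := by
  have hsum := (hg.hasSum_fCoeff_mul_exp θ).mul_left (c * Complex.exp (-(Complex.I * n * θ)))
  rw [Complex.ofReal_mul, mul_right_comm]
  refine hsum.congr_fun fun j => ?_
  have hexp : -(Complex.I * ((n - j : ℤ) : ℂ) * θ)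
      = -(Complex.I * n * θ) + Complex.I * j * θ := by push_cast; ring
  rw [hexp, Complex.exp_add]
  ring

lemma hasSum_fCoeff_mul (hf : SmoothPeriodic f) (hg : SmoothPeriodic g) (n : ℤ) :
    HasSum (fun j : ℤ => fCoeff f (n - j) * fCoeff g j) (fCoeff (fun θ => f θ * g θ) n) := by
  have hfc := hf.continuous
  obtain ⟨C, hC⟩ := hf.exists_abs_le
  have hint : HasSum
      (fun j : ℤ => ∫ θ in (0 : ℝ)..(2 * π),
        (f θ : ℂ) * Complex.exp (-(Complex.I * ((n - j : ℤ) : ℂ) * θ)) * fCoeff g j)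
      (∫ θ in (0 : ℝ)..(2 * π), ((f θ * g θ : ℝ) : ℂ) * Complex.exp (-(Complex.I * n * θ))) := by
    refine intervalIntegral.hasSum_integral_of_dominated_convergence
      (fun j _ => C * ‖fCoeff g j‖)
      (fun j => Continuous.aestronglyMeasurable (by fun_prop))
      (fun j => Eventually.of_forall fun θ hθ => ?_)
      (Eventually.of_forall fun θ _ => hg.summable_norm_fCoeff.mul_left C)
      intervalIntegrable_const (Eventually.of_forall fun θ _ => ?_)
    · rw [uIoc_of_le two_pi_pos.le] at hθ
      rw [norm_mul, norm_mul, norm_exp_neg_I_mul_int_mul, mul_one, Complex.norm_real]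
      exact mul_le_mul_of_nonneg_right (hC θ ⟨hθ.1.le, hθ.2⟩) (norm_nonneg _)
    · exact hg.hasSum_mul_exp_mul_fCoeff (f θ) n θ
  refine (hint.mul_left (1 / (2 * (π : ℂ)))).congr_fun fun j => ?_
  rw [intervalIntegral.integral_mul_const, ← mul_assoc]
  rfl

/-- The constant `D_m` of the tame estimate `‖f g‖_m ≤ D_m (‖f‖_m ‖g‖₂ + ‖f‖₂ ‖g‖_m)`. -/
noncomputable def productConst (m : ℕ) : ℝ := 2 ^ m * bracketSum

lemma one_le_productConst (m : ℕ) : 1 ≤ productConst m :=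
  one_le_mul_of_one_le_of_one_le (one_le_pow₀ one_le_two) one_le_bracketSum

lemma productConst_mono {m m' : ℕ} (h : m ≤ m') : productConst m ≤ productConst m' :=
  mul_le_mul_of_nonneg_right (pow_le_pow_right₀ one_le_two h)
    (zero_le_one.trans one_le_bracketSum)

lemma norm_fCoeff_mul_fCoeff_le (hf : SmoothPeriodic f) (hg : SmoothPeriodic g) (m : ℕ)
    (n j : ℤ) :
    ‖fCoeff f (n - j) * fCoeff g j‖ ≤
      2 ^ m * (bracket n ^ m)⁻¹ * (fourierNorm m f * fourierNorm 2 g) * (bracket j ^ 2)⁻¹ +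
      2 ^ m * (bracket n ^ m)⁻¹ * (fourierNorm 2 f * fourierNorm m g)
        * (bracket (n - j) ^ 2)⁻¹ := by
  have hn := bracket_pos n
  have hj := bracket_pos j
  have hnj := bracket_pos (n - j)
  have hf2 := fourierNorm_nonneg 2 f
  have hfm := fourierNorm_nonneg m f
  have hg2 := fourierNorm_nonneg 2 g
  have hgm := fourierNorm_nonneg m g
  rw [norm_mul]
  rcases bracket_le_two_mul_or n j with h | h
  · calc ‖fCoeff f (n - j)‖ * ‖fCoeff g j‖
        ≤ fourierNorm m f * (bracket (n - j) ^ m)⁻¹ * (fourierNorm 2 g * (bracket j ^ 2)⁻¹) := by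
          gcongr
          · exact hf.norm_fCoeff_le_mul_inv m (n - j)
          · exact hg.norm_fCoeff_le_mul_inv 2 j
      _ ≤ fourierNorm m f * (2 ^ m * (bracket n ^ m)⁻¹)
            * (fourierNorm 2 g * (bracket j ^ 2)⁻¹) := by
          gcongr
          exact inv_bracket_pow_le h m
      _ = 2 ^ m * (bracket n ^ m)⁻¹ * (fourierNorm m f * fourierNorm 2 g)
            * (bracket j ^ 2)⁻¹ := by ring
      _ ≤ _ := le_add_of_nonneg_right (by positivity)
  · calc ‖fCoeff f (n - j)‖ * ‖fCoeff g j‖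
        ≤ fourierNorm 2 f * (bracket (n - j) ^ 2)⁻¹ * (fourierNorm m g * (bracket j ^ m)⁻¹) := by
          gcongr
          · exact hf.norm_fCoeff_le_mul_inv 2 (n - j)
          · exact hg.norm_fCoeff_le_mul_inv m j
      _ ≤ fourierNorm 2 f * (bracket (n - j) ^ 2)⁻¹
            * (fourierNorm m g * (2 ^ m * (bracket n ^ m)⁻¹)) := by
          gcongr
          exact inv_bracket_pow_le h m
      _ = 2 ^ m * (bracket n ^ m)⁻¹ * (fourierNorm 2 f * fourierNorm m g)
            * (bracket (n - j) ^ 2)⁻¹ := by ring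
      _ ≤ _ := le_add_of_nonneg_left (by positivity)

lemma fourierNorm_mul_le (hf : SmoothPeriodic f) (hg : SmoothPeriodic g) (m : ℕ) :
    fourierNorm m (fun θ => f θ * g θ) ≤
      productConst m * (fourierNorm m f * fourierNorm 2 g + fourierNorm 2 f * fourierNorm m g) := by
  refine fourierNorm_le fun n => ?_
  have hn := bracket_pos n
  have hcoeff : ‖fCoeff (fun θ => f θ * g θ) n‖ ≤
      2 ^ m * (bracket n ^ m)⁻¹ * (fourierNorm m f * fourierNorm 2 g) * bracketSum +
      2 ^ m * (bracket n ^ m)⁻¹ * (fourierNorm 2 f * fourierNorm m g) * bracketSum := by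
    rw [← (hasSum_fCoeff_mul hf hg n).tsum_eq]
    exact tsum_of_norm_bounded ((hasSum_inv_bracket_sq.mul_left _).add
      ((hasSum_inv_bracket_sub_sq n).mul_left _)) (norm_fCoeff_mul_fCoeff_le hf hg m n)
  refine (mul_le_mul_of_nonneg_left hcoeff (pow_pos hn m).le).trans_eq ?_
  rw [productConst]
  field_simp

end Inversion

/-! ### Tame calculus near the constant function -/

/-- `f` is controlled by `A` times `ε`, both in the low norm `‖·‖₂` and in the high norm `‖·‖_m`.
By the tame product estimate, products of such functions are quadratically small in `ε`, with
only one factor measured in the high norm. -/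
structure Tame (m : ℕ) (A : ℝ) (ε f : ℝ → ℝ) : Prop where
  nonneg : 0 ≤ A
  smooth : SmoothPeriodic f
  norm_two_le : fourierNorm 2 f ≤ A * fourierNorm 2 ε
  norm_le : fourierNorm m f ≤ A * fourierNorm m ε

namespace Tame

variable {m : ℕ} {A B : ℝ} {ε f g : ℝ → ℝ}

protected lemma refl (hε : SmoothPeriodic ε) : Tame m 1 ε ε :=
  ⟨zero_le_one, hε, (one_mul _).ge, (one_mul _).ge⟩

lemma two (hf : Tame m A ε f) : Tame 2 A ε f :=
  ⟨hf.nonneg, hf.smooth, hf.norm_two_le, hf.norm_two_le⟩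

protected lemma add (hf : Tame m A ε f) (hg : Tame m B ε g) :
    Tame m (A + B) ε fun θ => f θ + g θ where
  nonneg := add_nonneg hf.nonneg hg.nonneg
  smooth := hf.smooth.add hg.smooth
  norm_two_le := by
    linarith [fourierNorm_add_le hf.smooth hg.smooth 2, hf.norm_two_le, hg.norm_two_le]
  norm_le := by
    linarith [fourierNorm_add_le hf.smooth hg.smooth m, hf.norm_le, hg.norm_le]

lemma fourierNorm_mul_le (hf : Tame m A ε f) (hg : Tame m B ε g) :
    fourierNorm m (fun θ => f θ * g θ) ≤
      2 * productConst m * A * B * (fourierNorm 2 ε * fourierNorm m ε) := by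
  have hA := hf.nonneg
  have hD := zero_le_one.trans (one_le_productConst m)
  have hε2 := fourierNorm_nonneg 2 ε
  have hεm := fourierNorm_nonneg m ε
  have hg2 := fourierNorm_nonneg 2 g
  have hgm := fourierNorm_nonneg m g
  calc fourierNorm m (fun θ => f θ * g θ)
      ≤ productConst m * (fourierNorm m f * fourierNorm 2 g + fourierNorm 2 f * fourierNorm m g) :=
        _root_.fourierNorm_mul_le hf.smooth hg.smooth m
    _ ≤ productConst m * (A * fourierNorm m ε * (B * fourierNorm 2 ε)
          + A * fourierNorm 2 ε * (B * fourierNorm m ε)) := by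
        gcongr
        exacts [hf.norm_le, hg.norm_two_le, hf.norm_two_le, hg.norm_le]
    _ = _ := by ring

protected lemma mul (hf : Tame m A ε f) (hg : Tame m B ε g) (hm : 2 ≤ m)
    (hε : fourierNorm 2 ε ≤ 1) : Tame m (2 * productConst m * A * B) ε fun θ => f θ * g θ := by
  have hA := hf.nonneg
  have hB := hg.nonneg
  have hD := zero_le_one.trans (one_le_productConst m)
  have hεm := fourierNorm_nonneg m ε
  have hε2 := fourierNorm_nonneg 2 ε
  refine ⟨by positivity, hf.smooth.mul hg.smooth, ?_, ?_⟩
  · refine (hf.two.fourierNorm_mul_le hg.two).trans ?_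
    gcongr
    · exact productConst_mono hm
    · exact mul_le_of_le_one_left hε2 hε
  · refine (hf.fourierNorm_mul_le hg).trans ?_
    gcongr
    exact mul_le_of_le_one_left hεm hε

end Tame

/-- `κ` is the reciprocal of `1 + ε`, with `ε` so small in the low norm that products with `ε`
can be absorbed in the tame estimate of order `m`. -/
structure IsSmallReciprocal (m : ℕ) (ε κ : ℝ → ℝ) : Prop where
  two_le : 2 ≤ m
  smooth : SmoothPeriodic ε
  smooth_reciprocal : SmoothPeriodic κ
  mul_eq_one : ∀ θ, κ θ * (1 + ε θ) = 1
  small : 4 * productConst m * fourierNorm 2 ε ≤ 1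

namespace IsSmallReciprocal

variable {m : ℕ} {ε κ : ℝ → ℝ}

protected lemma two (h : IsSmallReciprocal m ε κ) : IsSmallReciprocal 2 ε κ := by
  refine { h with two_le := le_rfl, small := le_trans ?_ h.small }
  have := fourierNorm_nonneg 2 ε
  gcongr
  exact productConst_mono h.two_le

lemma fourierNorm_two_le (h : IsSmallReciprocal m ε κ) : fourierNorm 2 ε ≤ 1 / 4 := by
  nlinarith [h.small, one_le_productConst m, fourierNorm_nonneg 2 ε]

lemma fourierNorm_sub_one_le_add (h : IsSmallReciprocal m ε κ) (i : ℕ) :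
    fourierNorm i (fun θ => κ θ - 1) ≤ fourierNorm i ε + productConst i *
      (fourierNorm i ε * fourierNorm 2 (fun θ => κ θ - 1)
        + fourierNorm 2 ε * fourierNorm i (fun θ => κ θ - 1)) := by
  have hu : SmoothPeriodic fun θ => κ θ - 1 := h.smooth_reciprocal.sub (.const 1)
  have hrec : (fun θ => κ θ - 1) = fun θ => -(ε θ + ε θ * (κ θ - 1)) :=
    funext fun θ => by linear_combination h.mul_eq_one θ
  conv_lhs => rw [hrec, fourierNorm_neg]
  exact (fourierNorm_add_le h.smooth (h.smooth.mul hu) i).trans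
    (add_le_add_right (fourierNorm_mul_le h.smooth hu i) _)

lemma tame_sub_one (h : IsSmallReciprocal m ε κ) : Tame m 2 ε fun θ => κ θ - 1 := by
  have hlow := h.fourierNorm_sub_one_le_add 2
  have hhigh := h.fourierNorm_sub_one_le_add m
  have hεm := fourierNorm_nonneg m ε
  have hu2 := fourierNorm_nonneg 2 fun θ => κ θ - 1
  have hum := fourierNorm_nonneg m fun θ => κ θ - 1
  have hlow' : fourierNorm 2 (fun θ => κ θ - 1) ≤ 2 * fourierNorm 2 ε := by
    nlinarith [mul_le_mul_of_nonneg_right h.two.small hu2]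
  refine ⟨zero_le_two, h.smooth_reciprocal.sub (.const 1), hlow', ?_⟩
  have hD := zero_le_one.trans (one_le_productConst m)
  have hcross : productConst m * (fourierNorm m ε * fourierNorm 2 fun θ => κ θ - 1)
      ≤ productConst m * (fourierNorm m ε * (2 * fourierNorm 2 ε)) := by gcongr
  nlinarith [mul_le_mul_of_nonneg_right h.small hum, mul_le_mul_of_nonneg_right h.small hεm]

lemma fourierNorm_two_reciprocal_le (h : IsSmallReciprocal m ε κ) : fourierNorm 2 κ ≤ 2 := by
  have hadd := fourierNorm_add_le h.tame_sub_one.smooth (.const 1) 2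
  simp only [sub_add_cancel] at hadd
  linarith [h.tame_sub_one.norm_two_le, h.fourierNorm_two_le, fourierNorm_one_le 2]

end IsSmallReciprocal

lemma exists_tame_pow_sub_one (m p : ℕ) :
    ∃ A, ∀ ε κ, IsSmallReciprocal m ε κ → Tame m A ε fun θ => κ θ ^ p - 1 := by
  induction p with
  | zero =>
    refine ⟨0, fun ε κ _ => ⟨le_rfl, by simpa using .const 0, ?_, ?_⟩⟩ <;>
      simp [fourierNorm, fCoeff_const]
  | succ p ih =>
    obtain ⟨A, hA⟩ := ih
    refine ⟨A + 2 + 2 * productConst m * A * 2, fun ε κ h => ?_⟩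
    have hp := hA ε κ h
    have h1 := h.tame_sub_one
    have hmul := hp.mul h1 h.two_le (by linarith [h.fourierNorm_two_le])
    convert (hp.add h1).add hmul using 2 with θ
    ring

lemma exists_fourierNorm_pow_sub_linear_le (m p : ℕ) :
    ∃ C > 0, ∀ ε κ, IsSmallReciprocal m ε κ →
      fourierNorm m (fun θ => κ θ ^ p - 1 + p * ε θ) ≤
        C * (fourierNorm 2 ε * fourierNorm m ε) := by
  induction p with
  | zero =>
    refine ⟨1, one_pos, fun ε κ _ => ?_⟩
    have := mul_nonneg (fourierNorm_nonneg 2 ε) (fourierNorm_nonneg m ε)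
    simpa [fourierNorm, fCoeff_const] using this
  | succ p ih =>
    obtain ⟨C, hC, hQ⟩ := ih
    obtain ⟨A, hA⟩ := exists_tame_pow_sub_one m p
    have hD := one_le_productConst m
    refine ⟨C + 2 * productConst m * |A| * 2 + 2 * productConst m * 1 * 2, by positivity,
      fun ε κ h => ?_⟩
    have hp := hA ε κ h
    have h1 := h.tame_sub_one
    have hself : Tame m 1 ε ε := .refl h.smooth
    have hQsmooth : SmoothPeriodic fun θ => κ θ ^ p - 1 + p * ε θ :=
      hp.smooth.add (h.smooth.const_mul p)
    have hrec : (fun θ => κ θ ^ (p + 1) - 1 + ((p + 1 : ℕ) : ℝ) * ε θ) = fun θ =>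
        κ θ ^ p - 1 + p * ε θ + (κ θ ^ p - 1) * (κ θ - 1) - ε θ * (κ θ - 1) := by
      funext θ
      push_cast
      linear_combination h.mul_eq_one θ
    rw [hrec, abs_of_nonneg hp.nonneg]
    have hsub := fourierNorm_sub_le (hQsmooth.add (hp.smooth.mul h1.smooth))
      (h.smooth.mul h1.smooth) m
    have hadd := fourierNorm_add_le hQsmooth (hp.smooth.mul h1.smooth) m
    linarith [hQ ε κ h, hp.fourierNorm_mul_le h1, hself.fourierNorm_mul_le h1]

lemma exists_threshold_fourierNorm_two_pow_sub_linear_le (p : ℕ) {δ : ℝ} (hδ : 0 < δ) :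
    ∃ η > 0, 4 * productConst 2 * η ≤ 1 ∧ ∀ ε κ, IsSmallReciprocal 2 ε κ →
      fourierNorm 2 ε ≤ η →
        fourierNorm 2 (fun θ => κ θ ^ p - 1 + p * ε θ) ≤ δ * fourierNorm 2 ε := by
  obtain ⟨C, hC, hQ⟩ := exists_fourierNorm_pow_sub_linear_le 2 p
  have hD := one_le_productConst 2
  refine ⟨min (1 / (4 * productConst 2)) (δ / C), by positivity, ?_, fun ε κ h hη => ?_⟩
  · rw [← le_div_iff₀' (by positivity)]
    exact min_le_left _ _
  · have hε := fourierNorm_nonneg 2 ε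
    have hsmall : C * fourierNorm 2 ε ≤ δ := by
      rw [← le_div_iff₀' hC]
      exact hη.trans (min_le_right _ _)
    calc _ ≤ C * (fourierNorm 2 ε * fourierNorm 2 ε) := hQ ε κ h
      _ = C * fourierNorm 2 ε * fourierNorm 2 ε := by ring
      _ ≤ δ * fourierNorm 2 ε := by gcongr

/-! ### Relative deviation from the mean -/

/-- The relative deviation `f / f̂(0) - 1` of `f` from its mean value. -/
noncomputable def relDeviation (f : ℝ → ℝ) (θ : ℝ) : ℝ := (circleMean f)⁻¹ * f θ - 1

section RelDeviation

variable {f : ℝ → ℝ}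

lemma SmoothPeriodic.relDeviation (hf : SmoothPeriodic f) : SmoothPeriodic (relDeviation f) :=
  (hf.const_mul _).sub (.const 1)

lemma relDeviation_eq_inv_mul_sub (hf : circleMean f ≠ 0) :
    relDeviation f = fun θ => (circleMean f)⁻¹ * (f θ - circleMean f) := by
  funext θ
  rw [relDeviation]
  field_simp

lemma fCoeff_relDeviation (hf : Continuous f) (h0 : circleMean f ≠ 0) (n : ℤ) :
    fCoeff (relDeviation f) n = if n = 0 then 0 else (circleMean f : ℂ)⁻¹ * fCoeff f n := by
  rw [relDeviation_eq_inv_mul_sub h0, fCoeff_const_mul, fCoeff_sub_circleMean hf]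
  split_ifs <;> simp

lemma fourierNorm_relDeviation (h0 : 0 < circleMean f) (m : ℕ) :
    fourierNorm m (relDeviation f) =
      (circleMean f)⁻¹ * fourierNorm m (fun θ => f θ - circleMean f) := by
  rw [relDeviation_eq_inv_mul_sub h0.ne', fourierNorm_const_mul, abs_of_pos (inv_pos.2 h0)]

lemma SmoothPeriodic.isSmallReciprocal_relDeviation (hf : SmoothPeriodic f)
    (hpos : ∀ θ, 0 < f θ) {m : ℕ} (hm : 2 ≤ m)
    (hsmall : 4 * productConst m * fourierNorm 2 (_root_.relDeviation f) ≤ 1) :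
    IsSmallReciprocal m (_root_.relDeviation f) fun θ => circleMean f * (f θ)⁻¹ where
  two_le := hm
  smooth := hf.relDeviation
  smooth_reciprocal := (hf.inv fun θ => (hpos θ).ne').const_mul _
  mul_eq_one θ := by
    have := (circleMean_pos hf.continuous hpos).ne'
    have := (hpos θ).ne'
    rw [_root_.relDeviation]
    field_simp
    ring
  small := hsmall

lemma SmoothPeriodic.fourierNorm_sub_circleMean_le_sub_const (hf : SmoothPeriodic f) (m : ℕ)
    (c : ℝ) :
    fourierNorm m (fun θ => f θ - circleMean f) ≤ fourierNorm m (fun θ => f θ - c) :=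
  (hf.sub (.const c)).fourierNorm_le_of_norm_fCoeff_le fun n => by
    rw [fCoeff_sub_circleMean hf.continuous, fCoeff_sub hf.continuous continuous_const,
      fCoeff_const]
    split_ifs <;> simp

lemma SmoothPeriodic.fourierNorm_inv_sub_circleMean_le (hf : SmoothPeriodic f)
    (hpos : ∀ θ, 0 < f θ) {m : ℕ} (hm : 2 ≤ m)
    (hsmall : 4 * productConst m * fourierNorm 2 (_root_.relDeviation f) ≤ 1) :
    fourierNorm m (fun θ => (f θ)⁻¹ - circleMean fun θ => (f θ)⁻¹) ≤
      2 * (circleMean f)⁻¹ * fourierNorm m (_root_.relDeviation f) := by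
  have hmean := circleMean_pos hf.continuous hpos
  have hscale : (fun θ => (f θ)⁻¹ - (circleMean f)⁻¹) =
      fun θ => (circleMean f)⁻¹ * (circleMean f * (f θ)⁻¹ - 1) := by
    funext θ
    field_simp
  calc fourierNorm m (fun θ => (f θ)⁻¹ - circleMean fun θ => (f θ)⁻¹)
      ≤ fourierNorm m (fun θ => (f θ)⁻¹ - (circleMean f)⁻¹) :=
        (hf.inv fun θ => (hpos θ).ne').fourierNorm_sub_circleMean_le_sub_const m _
    _ = (circleMean f)⁻¹ * fourierNorm m (fun θ => circleMean f * (f θ)⁻¹ - 1) := by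
        rw [hscale, fourierNorm_const_mul, abs_of_pos (inv_pos.2 hmean)]
    _ ≤ (circleMean f)⁻¹ * (2 * fourierNorm m (_root_.relDeviation f)) := by
        gcongr
        exact (hf.isSmallReciprocal_relDeviation hpos hm hsmall).tame_sub_one.norm_le
    _ = _ := by ring

lemma SmoothPeriodic.half_le_circleMean_mul_circleMean_inv (hf : SmoothPeriodic f)
    (hpos : ∀ θ, 0 < f θ) {m : ℕ} (hm : 2 ≤ m)
    (hsmall : 4 * productConst m * fourierNorm 2 (_root_.relDeviation f) ≤ 1) :
    1 / 2 ≤ circleMean f * circleMean fun θ => (f θ)⁻¹ := by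
  have hrec := hf.isSmallReciprocal_relDeviation hpos hm hsmall
  have hcoeff := hrec.tame_sub_one.smooth.norm_fCoeff_le_fourierNorm 2 0
  rw [fCoeff_sub hrec.smooth_reciprocal.continuous continuous_const, fCoeff_const_mul,
    fCoeff_zero, fCoeff_const, if_pos rfl, ← Complex.ofReal_mul, ← Complex.ofReal_sub,
    Complex.norm_real, Real.norm_eq_abs] at hcoeff
  linarith [neg_abs_le (circleMean f * (circleMean fun θ => (f θ)⁻¹) - 1),
    hrec.tame_sub_one.norm_two_le, hrec.fourierNorm_two_le]

lemma SmoothPeriodic.fourierNorm_relDeviation_inv_le (hf : SmoothPeriodic f)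
    (hpos : ∀ θ, 0 < f θ) {m : ℕ} (hm : 2 ≤ m)
    (hsmall : 4 * productConst m * fourierNorm 2 (_root_.relDeviation f) ≤ 1) :
    fourierNorm m (_root_.relDeviation fun θ => (f θ)⁻¹) ≤
      4 * fourierNorm m (_root_.relDeviation f) := by
  have hmean := circleMean_pos hf.continuous hpos
  have hinv := circleMean_pos (hf.inv fun θ => (hpos θ).ne').continuous
    fun θ => inv_pos.2 (hpos θ)
  have hhalf := hf.half_le_circleMean_mul_circleMean_inv hpos hm hsmall
  have hnorm := fourierNorm_nonneg m (_root_.relDeviation f)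
  rw [fourierNorm_relDeviation hinv, inv_mul_le_iff₀ hinv]
  refine (hf.fourierNorm_inv_sub_circleMean_le hpos hm hsmall).trans ?_
  rw [← mul_assoc]
  refine mul_le_mul_of_nonneg_right ?_ hnorm
  rw [← div_eq_mul_inv, div_le_iff₀ hmean]
  linarith

lemma SmoothPeriodic.bddAbove_sq_mul_fCoeff (hf : SmoothPeriodic f) {φ : ℂ → ℝ}
    (hφ : ∀ z, |φ z| ≤ ‖z‖) : BddAbove (range fun n : ℤ => (n : ℝ) ^ 2 * |φ (fCoeff f n)|) := by
  refine ⟨fourierNorm 2 f, forall_mem_range.2 fun n => le_trans ?_ (hf.le_fourierNorm 2 n)⟩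
  rw [← sq_abs]
  gcongr
  · exact abs_le_bracket n
  · exact hφ _

lemma SmoothPeriodic.sq_mul_norm_fCoeff_le_seminorm2 (hf : SmoothPeriodic f) (n : ℤ) :
    (n : ℝ) ^ 2 * ‖fCoeff f n‖ ≤ 2 * seminorm2 f := by
  have hre : (n : ℝ) ^ 2 * |(fCoeff f n).re| ≤ seminorm2 f :=
    (le_ciSup (hf.bddAbove_sq_mul_fCoeff Complex.abs_re_le_norm) n).trans (le_max_left _ _)
  have him : (n : ℝ) ^ 2 * |(fCoeff f n).im| ≤ seminorm2 f :=
    (le_ciSup (hf.bddAbove_sq_mul_fCoeff Complex.abs_im_le_norm) n).trans (le_max_right _ _)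
  have hsum := mul_le_mul_of_nonneg_left (Complex.norm_le_abs_re_add_abs_im (fCoeff f n))
    (sq_nonneg (n : ℝ))
  linarith

lemma SmoothPeriodic.fourierNorm_two_sub_circleMean_le_seminorm2 (hf : SmoothPeriodic f) :
    fourierNorm 2 (fun θ => f θ - circleMean f) ≤ 2 * seminorm2 f := by
  refine fourierNorm_le fun n => ?_
  rw [fCoeff_sub_circleMean hf.continuous]
  split_ifs with hn
  · simpa [hn] using hf.sq_mul_norm_fCoeff_le_seminorm2 0
  · simpa [bracket_of_ne_zero hn] using hf.sq_mul_norm_fCoeff_le_seminorm2 n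

end RelDeviation

/-! ### Time-dependent families -/

/-- A jointly smooth family `F t` of `2π`-periodic functions, with times `t` ranging over `I`. -/
structure SmoothPeriodicFamily (I : Set ℝ) (F : ℝ → ℝ → ℝ) : Prop where
  contDiffOn : ContDiffOn ℝ ∞ (Function.uncurry F) (I ×ˢ univ)
  periodic : ∀ t ∈ I, Function.Periodic (F t) (2 * π)

lemma eventually_forall_abs_sub_le {I : Set ℝ} {F : ℝ → ℝ → ℝ}
    (hF : ContinuousOn (Function.uncurry F) (I ×ˢ univ)) {t : ℝ} (ht : t ∈ I) {δ : ℝ}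
    (hδ : 0 < δ) : ∀ᶠ s in 𝓝[I] t, ∀ θ ∈ Icc 0 (2 * π), |F s θ - F t θ| ≤ δ := by
  obtain ⟨v, hv, hclose⟩ := isCompact_Icc.mem_uniformity_of_prod (k := Icc 0 (2 * π))
    (hF.mono (prod_mono_right (subset_univ _))) ht (Metric.dist_mem_uniformity hδ)
  filter_upwards [hv] with s hs θ hθ
  exact (hclose s hs θ hθ).le

namespace SmoothPeriodicFamily

variable {I : Set ℝ} {F F' : ℝ → ℝ → ℝ} {t : ℝ}

protected lemma smoothPeriodic (hF : SmoothPeriodicFamily I F) (ht : t ∈ I) :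
    SmoothPeriodic (F t) where
  contDiff := contDiffOn_univ.1 <| hF.contDiffOn.comp (f := fun θ : ℝ => (t, θ)) (by fun_prop)
    fun _ _ => ⟨ht, mem_univ _⟩
  periodic := hF.periodic t ht

protected lemma deriv (hF : SmoothPeriodicFamily I F) (hI : UniqueDiffOn ℝ I) :
    SmoothPeriodicFamily I fun t => deriv (F t) where
  contDiffOn := by
    have hfderiv := hF.contDiffOn.fderivWithin (hI.prod uniqueDiffOn_univ) (m := ∞) (by simp)
    refine (hfderiv.clm_apply (contDiffOn_const (c := ((0 : ℝ), (1 : ℝ))))).congr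
      fun q hq => ?_
    have hF' := (hF.contDiffOn.differentiableOn (by simp) q hq).hasFDerivWithinAt
    have hline : HasDerivAt (fun θ : ℝ => (q.1, θ)) ((0 : ℝ), (1 : ℝ)) q.2 :=
      (hasDerivAt_const _ _).prodMk (hasDerivAt_id _)
    have hcomp := hF'.comp_hasDerivWithinAt (t := I ×ˢ univ) q.2
      (hline.hasDerivWithinAt (s := univ)) fun _ _ => ⟨hq.1, mem_univ _⟩
    exact (hasDerivWithinAt_univ.1 hcomp).deriv
  periodic t ht := (hF.smoothPeriodic ht).deriv.periodic

protected lemma iteratedDeriv (hF : SmoothPeriodicFamily I F) (hI : UniqueDiffOn ℝ I) :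
    ∀ j : ℕ, SmoothPeriodicFamily I fun t => iteratedDeriv j (F t)
  | 0 => by simpa using hF
  | j + 1 => by simpa only [iteratedDeriv_succ] using (hF.iteratedDeriv hI j).deriv hI

lemma tendsto_fourierNorm_sub (hF : SmoothPeriodicFamily I F) (hI : UniqueDiffOn ℝ I)
    (m : ℕ) (ht : t ∈ I) :
    Tendsto (fun s => fourierNorm m fun θ => F s θ - F t θ) (𝓝[I] t) (𝓝 0) := by
  refine Metric.tendsto_nhds.2 fun δ hδ => ?_
  filter_upwards [self_mem_nhdsWithin,
    eventually_forall_abs_sub_le hF.contDiffOn.continuousOn ht (half_pos hδ),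
    eventually_forall_abs_sub_le (hF.iteratedDeriv hI m).contDiffOn.continuousOn ht (half_pos hδ)]
    with s hs hclose hclose'
  have hFs := hF.smoothPeriodic hs
  have hFt := hF.smoothPeriodic ht
  have hle : fourierNorm m (fun θ => F s θ - F t θ) ≤ δ / 2 :=
    fourierNorm_le <| (hFs.sub hFt).bracket_pow_mul_le_of_abs_le hclose fun θ hθ => by
      rw [iteratedDeriv_fun_sub (contDiff_infty.1 hFs.contDiff m).contDiffAt
        (contDiff_infty.1 hFt.contDiff m).contDiffAt]
      exact hclose' θ hθ
  rw [Real.dist_0_eq_abs, abs_of_nonneg (fourierNorm_nonneg _ _)]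
  linarith

lemma continuousOn_fCoeff (hF : SmoothPeriodicFamily I F) (hI : UniqueDiffOn ℝ I) (n : ℤ) :
    ContinuousOn (fun t => fCoeff (F t) n) I := fun t ht => by
  refine tendsto_iff_norm_sub_tendsto_zero.2 <| squeeze_zero' (.of_forall fun _ => norm_nonneg _)
    ?_ (hF.tendsto_fourierNorm_sub hI 0 ht)
  filter_upwards [self_mem_nhdsWithin] with s hs
  have hFs := hF.smoothPeriodic hs
  have hFt := hF.smoothPeriodic ht
  rw [← fCoeff_sub hFs.continuous hFt.continuous]
  exact (hFs.sub hFt).norm_fCoeff_le_fourierNorm 0 n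

lemma continuousOn_circleMean (hF : SmoothPeriodicFamily I F) (hI : UniqueDiffOn ℝ I) :
    ContinuousOn (fun t => circleMean (F t)) I :=
  Complex.continuous_re.comp_continuousOn (hF.continuousOn_fCoeff hI 0)

lemma continuousOn_fourierNorm_sub_circleMean (hF : SmoothPeriodicFamily I F)
    (hI : UniqueDiffOn ℝ I) (m : ℕ) :
    ContinuousOn (fun t => fourierNorm m fun θ => F t θ - circleMean (F t)) I := fun t ht => by
  refine tendsto_iff_norm_sub_tendsto_zero.2 <| squeeze_zero' (.of_forall fun _ => norm_nonneg _)
    ?_ (hF.tendsto_fourierNorm_sub hI m ht)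
  filter_upwards [self_mem_nhdsWithin] with s hs
  have hFs := hF.smoothPeriodic hs
  have hFt := hF.smoothPeriodic ht
  refine (abs_fourierNorm_sub_fourierNorm_le (hFs.sub (.const _)) (hFt.sub (.const _)) m).trans ?_
  refine (hFs.sub hFt).fourierNorm_le_of_norm_fCoeff_le fun n => ?_
  rw [fCoeff_sub (hFs.sub (.const _)).continuous (hFt.sub (.const _)).continuous,
    fCoeff_sub_circleMean hFs.continuous, fCoeff_sub_circleMean hFt.continuous,
    fCoeff_sub hFs.continuous hFt.continuous]
  split_ifs <;> simp

lemma exists_eventually_abs_le (hF : SmoothPeriodicFamily I F) (ht : t ∈ I) :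
    ∃ C, ∀ᶠ s in 𝓝[I] t, ∀ θ ∈ Icc 0 (2 * π), |F s θ| ≤ C := by
  obtain ⟨C, hC⟩ := (hF.smoothPeriodic ht).exists_abs_le
  refine ⟨1 + C, ?_⟩
  filter_upwards [eventually_forall_abs_sub_le hF.contDiffOn.continuousOn ht one_pos]
    with s hs θ hθ
  calc |F s θ| = |(F s θ - F t θ) + F t θ| := by rw [sub_add_cancel]
    _ ≤ 1 + C := (abs_add_le _ _).trans (add_le_add (hs θ hθ) (hC θ hθ))

lemma hasDerivAt_fCoeff (hF : SmoothPeriodicFamily I F) (hF' : SmoothPeriodicFamily I F')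
    (hderiv : ∀ t ∈ I, ∀ θ, HasDerivAt (F · θ) (F' t θ) t) (n : ℤ) (ht : I ∈ 𝓝 t) :
    HasDerivAt (fun t => fCoeff (F t) n) (fCoeff (F' t) n) t := by
  have hmem := mem_of_mem_nhds ht
  obtain ⟨C, hC⟩ := hF'.exists_eventually_abs_le hmem
  rw [nhdsWithin_eq_nhds.2 ht] at hC
  have hcont (s : ℝ) (hs : s ∈ I) := (hF.smoothPeriodic hs).continuous
  have hcont' := (hF'.smoothPeriodic hmem).continuous
  refine HasDerivAt.const_mul _ (intervalIntegral.hasDerivAt_integral_of_dominated_loc_of_deriv_le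
    (𝕜 := ℝ) (F := fun s θ => (F s θ : ℂ) * Complex.exp (-(Complex.I * n * θ)))
    (F' := fun s θ => (F' s θ : ℂ) * Complex.exp (-(Complex.I * n * θ)))
    (bound := fun _ => C) (inter_mem ht hC) ?_ (intervalIntegrable_mul_exp (hcont t hmem) n _ _)
    (Continuous.aestronglyMeasurable (by fun_prop)) (.of_forall fun θ hθ s hs => ?_)
    intervalIntegrable_const (.of_forall fun θ _ s hs => ?_)).2
  · filter_upwards [ht] with s hs
    have := hcont s hs
    exact Continuous.aestronglyMeasurable (by fun_prop)
  · rw [uIoc_of_le two_pi_pos.le] at hθ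
    rw [norm_mul, norm_exp_neg_I_mul_int_mul, mul_one, Complex.norm_real]
    exact hs.2 θ ⟨hθ.1.le, hθ.2⟩
  · exact (hderiv s hs.1 θ).ofReal_comp.mul_const _

end SmoothPeriodicFamily

/-! ### Comparison and continuity arguments -/

section Comparison

variable {t₀ t₁ β : ℝ}

lemma le_of_deriv_le_mul_sub {x x' a : ℝ → ℝ} (hx : ContinuousOn x (Icc t₀ t₁))
    (hderiv : ∀ t ∈ Ioo t₀ t₁, HasDerivAt x (x' t) t) (ha : ∀ t ∈ Ioo t₀ t₁, 0 ≤ a t)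
    (hle : ∀ t ∈ Ioo t₀ t₁, x' t ≤ a t * (β - x t)) (h0 : x t₀ ≤ β) :
    ∀ t ∈ Icc t₀ t₁, x t ≤ β := by
  intro t ht
  by_contra! hlt
  have hxt : ContinuousOn x (Icc t₀ t) := hx.mono (Icc_subset_Icc_right ht.2)
  let S : Set ℝ := {s ∈ Icc t₀ t | x s ≤ β}
  have hSbdd : BddAbove S := ⟨t, fun s hs => hs.1.2⟩
  obtain ⟨⟨hs₀, hst⟩, hsβ⟩ : sSup S ∈ S :=
    (hxt.preimage_isClosed_of_isClosed isClosed_Icc isClosed_Iic).csSup_mem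
      ⟨t₀, left_mem_Icc.2 ht.1, h0⟩ hSbdd
  set s := sSup S
  have habove (u : ℝ) (hu : u ∈ Ioo s t) : β < x u := by
    by_contra! hle
    exact hu.1.not_ge (le_csSup hSbdd ⟨⟨hs₀.trans hu.1.le, hu.2.le⟩, hle⟩)
  have hanti : AntitoneOn x (Icc s t) := by
    refine antitoneOn_of_hasDerivWithinAt_nonpos (f' := x') (convex_Icc s t)
      (hxt.mono (Icc_subset_Icc_left hs₀)) ?_ ?_ <;> rw [interior_Icc] <;> intro u hu
    · exact (hderiv u ⟨hs₀.trans_lt hu.1, hu.2.trans_le ht.2⟩).hasDerivWithinAt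
    · have hu' : u ∈ Ioo t₀ t₁ := ⟨hs₀.trans_lt hu.1, hu.2.trans_le ht.2⟩
      exact (hle u hu').trans
        (mul_nonpos_of_nonneg_of_nonpos (ha u hu') (sub_neg.2 (habove u hu)).le)
  linarith [hanti (left_mem_Icc.2 hst) (right_mem_Icc.2 hst) hst]

lemma norm_le_of_hasDerivAt_neg_smul_add {E : Type*} [NormedAddCommGroup E] [NormedSpace ℝ E]
    {g F : ℝ → E} {a : ℝ → ℝ} (hg : ContinuousOn g (Icc t₀ t₁))
    (hderiv : ∀ t ∈ Ioo t₀ t₁, HasDerivAt g (-(a t) • g t + F t) t)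
    (ha : ∀ t ∈ Ioo t₀ t₁, 0 ≤ a t) (hF : ∀ t ∈ Ioo t₀ t₁, ‖F t‖ ≤ a t * β)
    (h0 : ‖g t₀‖ ≤ β) : ∀ t ∈ Icc t₀ t₁, ‖g t‖ ≤ β := by
  intro t ht
  obtain ⟨φ, hφ, hφt⟩ := exists_dual_vector'' ℝ (g t)
  have hφle (v : E) : φ v ≤ ‖v‖ :=
    (le_abs_self _).trans ((φ.le_of_opNorm_le_of_le hφ le_rfl).trans_eq (one_mul _))
  have hcomp := le_of_deriv_le_mul_sub (x := fun s => φ (g s)) (a := a)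
    (φ.continuous.comp_continuousOn hg) (fun s hs => φ.hasFDerivAt.comp_hasDerivAt s (hderiv s hs))
    ha (fun s hs => ?_) ((hφle _).trans h0) t ht
  · rwa [hφt] at hcomp
  · have := (hφle (F s)).trans (hF s hs)
    simp only [map_add, map_smul, smul_eq_mul]
    linarith

/-- Iterating the comparison halves the excess over `B` at every step. -/
lemma norm_le_of_forall_hasDerivAt_neg_smul_add {ι E : Type*} [NormedAddCommGroup E]
    [NormedSpace ℝ E] {g F : ι → ℝ → E} {a : ι → ℝ → ℝ} {B K : ℝ}
    (hg : ∀ i, ContinuousOn (g i) (Icc t₀ t₁))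
    (hderiv : ∀ i, ∀ t ∈ Ioo t₀ t₁, HasDerivAt (g i) (-(a i t) • g i t + F i t) t)
    (ha : ∀ i, ∀ t ∈ Ioo t₀ t₁, 0 ≤ a i t)
    (hF : ∀ t ∈ Ioo t₀ t₁, ∀ G, (∀ i, ‖g i t‖ ≤ G) → ∀ i, ‖F i t‖ ≤ a i t * (G / 2))
    (hK : ∀ i, ∀ t ∈ Icc t₀ t₁, ‖g i t‖ ≤ K) (hB : 0 ≤ B) (h0 : ∀ i, ‖g i t₀‖ ≤ B) :
    ∀ i, ∀ t ∈ Icc t₀ t₁, ‖g i t‖ ≤ B := by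
  have hiter : ∀ j : ℕ, ∀ i, ∀ t ∈ Icc t₀ t₁, ‖g i t‖ ≤ max B (K * (1 / 2) ^ j) := by
    intro j
    induction j with
    | zero => intro i t ht; simpa using Or.inr (hK i t ht)
    | succ j ih =>
      intro i
      refine norm_le_of_hasDerivAt_neg_smul_add (hg i) (hderiv i) (ha i) (fun t ht => ?_)
        ((h0 i).trans (le_max_left _ _))
      refine (hF t ht _ (fun i => ih i t (Ioo_subset_Icc_self ht)) i).trans
        (mul_le_mul_of_nonneg_left ?_ (ha i t ht))
      rw [← max_div_div_right zero_le_two]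
      exact max_le_max (half_le_self hB) (by rw [pow_succ]; linarith)
  intro i t ht
  have hlim : Tendsto (fun j : ℕ => max B (K * (1 / 2) ^ j)) atTop (𝓝 (max B (K * 0))) :=
    tendsto_const_nhds.max
      ((tendsto_pow_atTop_nhds_zero_of_lt_one (by norm_num) (by norm_num)).const_mul K)
  rw [mul_zero, max_eq_left hB] at hlim
  exact ge_of_tendsto' hlim fun j => hiter j i t ht

lemma le_of_continuousOn_of_bootstrap {N : ℝ → ℝ} {a b c c' : ℝ}
    (hN : ContinuousOn N (Ico a b)) (hc : c' < c) (ha : N a ≤ c')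
    (hstep : ∀ t ∈ Ico a b, (∀ s ∈ Icc a t, N s ≤ c) → N t ≤ c') :
    ∀ t ∈ Ico a b, N t ≤ c' := by
  intro t ht
  have hsub : Icc a t ⊆ Ico a b := fun s hs => ⟨hs.1, hs.2.trans_lt ht.2⟩
  have hclosed : IsClosed ({s | N s ≤ c'} ∩ Icc a t) := by
    rw [inter_comm]
    exact (hN.mono hsub).preimage_isClosed_of_isClosed isClosed_Icc isClosed_Iic
  refine hclosed.Icc_subset_of_forall_mem_nhdsGT_of_Icc_subset ha (fun s hs hle => ?_)
    (right_mem_Icc.2 ht.1)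
  have hsN : N s < c := (hle (right_mem_Icc.2 hs.1)).trans_lt hc
  have hright : ∀ᶠ u in 𝓝[>] s, N u < c := by
    have hcont := (hN s (hsub ⟨hs.1, hs.2.le⟩)).mono
      (show Ioo s b ⊆ Ico a b from fun u hu => ⟨hs.1.trans hu.1.le, hu.2⟩)
    rw [ContinuousWithinAt, nhdsWithin_Ioo_eq_nhdsGT (hs.2.trans ht.2)] at hcont
    exact hcont.eventually_lt_const hsN
  obtain ⟨u, hu, hlt⟩ := mem_nhdsGT_iff_exists_Ioo_subset.1 hright
  filter_upwards [Ioo_mem_nhdsGT (lt_min hu hs.2)] with v hv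
  refine hstep v ⟨hs.1.trans hv.1.le, (hv.2.trans_le (min_le_right _ _)).trans ht.2⟩
    fun w hw => ?_
  rcases le_or_gt w s with hws | hsw
  · exact (hle ⟨hw.1, hws⟩).trans hc.le
  · exact (hlt ⟨hsw, hw.2.trans_lt (hv.2.trans_le (min_le_left _ _))⟩).le

end Comparison

/-! ### The flow in terms of the radius of curvature -/

/-- The radius of curvature `r = 1 / k`, with time as its first argument. -/
noncomputable def radius (k : ℝ → ℝ → ℝ) (t θ : ℝ) : ℝ := (k θ t)⁻¹

/-- The mean radius of curvature `ρ`; it is `1 / 2π` times the length of the curve. -/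
noncomputable def meanRadius (k : ℝ → ℝ → ℝ) (t : ℝ) : ℝ := circleMean (radius k t)

/-- The relative deviation `ε` of the radius of curvature from its mean, so that `r = ρ (1 + ε)`. -/
noncomputable def deviation (k : ℝ → ℝ → ℝ) (t : ℝ) : ℝ → ℝ := relDeviation (radius k t)

/-- The nonlinear part `q` of the normalised speed `(ρ k) ^ p = 1 - p ε + q`. -/
noncomputable def remainder (p : ℕ) (k : ℝ → ℝ → ℝ) (t θ : ℝ) : ℝ :=
  (meanRadius k t * k θ t) ^ p - 1 + p * deviation k t θ

/-- The mean `q̂(0)` of the nonlinear part of the speed, which enters the equation for `ρ`. -/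
noncomputable def remainderMean (p : ℕ) (k : ℝ → ℝ → ℝ) (t : ℝ) : ℝ :=
  circleMean (remainder p k t)

lemma deriv_deriv_pow {f : ℝ → ℝ} (hf : ContDiff ℝ 2 f) {p : ℕ} (hp : 1 ≤ p) (θ : ℝ) :
    deriv (deriv fun x => f x ^ p) θ =
      p * (f θ ^ (p - 1) * deriv (deriv f) θ +
        ((p : ℝ) - 1) * f θ ^ (p - 2) * deriv f θ ^ 2) := by
  have hf' (x : ℝ) : HasDerivAt f (deriv f x) x := (hf.differentiable two_ne_zero x).hasDerivAt
  have hf'' : HasDerivAt (deriv f) (deriv (deriv f) θ) θ :=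
    (hf.differentiable_deriv_two θ).hasDerivAt
  have hpow : deriv (fun x => f x ^ p) = fun x => p * f x ^ (p - 1) * deriv f x :=
    funext fun x => ((hf' x).fun_pow p).deriv
  rw [hpow, ((((hf' θ).fun_pow (p - 1)).const_mul (p : ℝ)).fun_mul hf'').deriv, Nat.cast_sub hp,
    Nat.sub_sub]
  push_cast
  ring

namespace IsPCSF

variable {p : ℕ} {T t : ℝ} {k : ℝ → ℝ → ℝ} {ψ : ℝ → ℝ}

lemma curvature_pos (h : IsPCSF p T k ψ) (ht : t ∈ Ico 0 T) (θ : ℝ) : 0 < k θ t :=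
  h.2.2.1 θ t ht

lemma smoothPeriodicFamily_curvature (h : IsPCSF p T k ψ) :
    SmoothPeriodicFamily (Ico 0 T) fun t θ => k θ t where
  contDiffOn := h.1.comp (f := fun q : ℝ × ℝ => (q.2, q.1)) (by fun_prop) fun _ hq => ⟨hq.2, hq.1⟩
  periodic t _ θ := h.2.1 θ t

lemma smoothPeriodicFamily_radius (h : IsPCSF p T k ψ) :
    SmoothPeriodicFamily (Ico 0 T) (radius k) where
  contDiffOn := h.smoothPeriodicFamily_curvature.contDiffOn.inv
    fun q hq => (h.curvature_pos hq.1 q.2).ne'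
  periodic t _ θ := by rw [radius, radius, h.2.1 θ t]

lemma smoothPeriodicFamily_curvature_pow (h : IsPCSF p T k ψ) (j : ℕ) :
    SmoothPeriodicFamily (Ico 0 T) fun t θ => k θ t ^ j where
  contDiffOn := h.smoothPeriodicFamily_curvature.contDiffOn.pow j
  periodic _ ht := ((h.smoothPeriodicFamily_curvature.smoothPeriodic ht).pow j).periodic

lemma smoothPeriodic_radius (h : IsPCSF p T k ψ) (ht : t ∈ Ico 0 T) :
    SmoothPeriodic (radius k t) :=
  h.smoothPeriodicFamily_radius.smoothPeriodic ht

lemma radius_pos (h : IsPCSF p T k ψ) (ht : t ∈ Ico 0 T) (θ : ℝ) : 0 < radius k t θ :=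
  inv_pos.2 (h.curvature_pos ht θ)

lemma meanRadius_pos (h : IsPCSF p T k ψ) (ht : t ∈ Ico 0 T) : 0 < meanRadius k t :=
  circleMean_pos (h.smoothPeriodic_radius ht).continuous (h.radius_pos ht)

lemma continuousOn_meanRadius (h : IsPCSF p T k ψ) : ContinuousOn (meanRadius k) (Ico 0 T) :=
  h.smoothPeriodicFamily_radius.continuousOn_circleMean (uniqueDiffOn_Ico 0 T)

lemma smoothPeriodic_deviation (h : IsPCSF p T k ψ) (ht : t ∈ Ico 0 T) :
    SmoothPeriodic (deviation k t) :=
  (h.smoothPeriodic_radius ht).relDeviation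

lemma smoothPeriodic_remainder (h : IsPCSF p T k ψ) (ht : t ∈ Ico 0 T) :
    SmoothPeriodic (remainder p k t) :=
  ((((h.smoothPeriodicFamily_curvature.smoothPeriodic ht).const_mul _).pow p).sub
    (.const 1)).add ((h.smoothPeriodic_deviation ht).const_mul _)

lemma continuousOn_fourierNorm_deviation (h : IsPCSF p T k ψ) (m : ℕ) :
    ContinuousOn (fun t => fourierNorm m (deviation k t)) (Ico 0 T) := by
  have hcont := h.smoothPeriodicFamily_radius.continuousOn_fourierNorm_sub_circleMean
    (uniqueDiffOn_Ico 0 T) m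
  exact ((h.continuousOn_meanRadius.inv₀ fun t ht => (h.meanRadius_pos ht).ne').mul hcont).congr
    fun t ht => fourierNorm_relDeviation (h.meanRadius_pos ht) m

lemma isSmallReciprocal_deviation (h : IsPCSF p T k ψ) (ht : t ∈ Ico 0 T) {m : ℕ} (hm : 2 ≤ m)
    (hsmall : 4 * productConst m * fourierNorm 2 (deviation k t) ≤ 1) :
    IsSmallReciprocal m (deviation k t) fun θ => meanRadius k t * k θ t := by
  simpa only [deviation, meanRadius, radius, inv_inv] using
    (h.smoothPeriodic_radius ht).isSmallReciprocal_relDeviation (h.radius_pos ht) hm hsmall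

lemma fCoeff_deviation (h : IsPCSF p T k ψ) (ht : t ∈ Ico 0 T) (n : ℤ) :
    fCoeff (deviation k t) n =
      if n = 0 then 0 else (meanRadius k t : ℂ)⁻¹ * fCoeff (radius k t) n :=
  fCoeff_relDeviation (h.smoothPeriodic_radius ht).continuous (h.meanRadius_pos ht).ne' n

lemma fCoeff_radius_neg_one (h : IsPCSF p T k ψ) (ht : t ∈ Ico 0 T) :
    fCoeff (radius k t) (-1) = 0 := by
  have hclosed := h.2.2.2.2.2.2.2.2.2 t ht
  rw [fCoeff, mul_eq_zero, ← hclosed]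
  refine .inr (intervalIntegral.integral_congr fun θ _ => ?_)
  simp [radius, div_eq_inv_mul]

lemma fCoeff_deviation_eq_zero (h : IsPCSF p T k ψ) (ht : t ∈ Ico 0 T) {n : ℤ} (hn : |n| < 2) :
    fCoeff (deviation k t) n = 0 := by
  have hneg := h.fCoeff_radius_neg_one ht
  have hpos : fCoeff (radius k t) 1 = 0 := by simpa [fCoeff_neg] using hneg
  have hcases : n = 0 ∨ n = 1 ∨ n = -1 := by grind
  rw [h.fCoeff_deviation ht]
  rcases hcases with rfl | rfl | rfl <;> simp [hneg, hpos]

lemma abs_remainderMean_le (h : IsPCSF p T k ψ) (ht : t ∈ Ico 0 T) :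
    |remainderMean p k t| ≤ fourierNorm 2 (remainder p k t) :=
  (Complex.abs_re_le_norm _).trans
    ((h.smoothPeriodic_remainder ht).norm_fCoeff_le_fourierNorm 2 0)

/-! ### Evolution equations -/

lemma hasDerivAt_radius (h : IsPCSF p T k ψ) (hp : 1 ≤ p) (ht : t ∈ Ico 0 T) (θ : ℝ) :
    HasDerivAt (radius k · θ)
      (-(1 / (p : ℝ)) * (deriv (deriv fun x => k x t ^ p) θ + k θ t ^ p)) t := by
  have hk := (h.curvature_pos ht θ).ne'
  have hp0 : (p : ℝ) ≠ 0 := Nat.cast_ne_zero.2 (by lia)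
  have hsmooth := (h.smoothPeriodicFamily_curvature.smoothPeriodic ht).contDiff
  refine ((h.2.2.2.1 θ t ht).inv hk).congr_deriv ?_
  rw [deriv_deriv_pow (contDiff_infty.1 hsmooth 2) hp]
  field_simp

lemma hasDerivAt_fCoeff_radius (h : IsPCSF p T k ψ) (hp : 1 ≤ p) (ht : t ∈ Ioo 0 T) (n : ℤ) :
    HasDerivAt (fun s => fCoeff (radius k s) n)
      ((((n : ℝ) ^ 2 - 1) / p : ℝ) * fCoeff (fun θ => k θ t ^ p) n) t := by
  have hspeed := h.smoothPeriodicFamily_curvature_pow p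
  have hspeed'' := (hspeed.deriv (uniqueDiffOn_Ico 0 T)).deriv (uniqueDiffOn_Ico 0 T)
  have hvel : SmoothPeriodicFamily (Ico 0 T) fun t θ =>
      -(1 / (p : ℝ)) * (deriv (deriv fun x => k x t ^ p) θ + k θ t ^ p) :=
    { contDiffOn := contDiffOn_const.mul (hspeed''.contDiffOn.add hspeed.contDiffOn)
      periodic := fun s hs => (((hspeed''.smoothPeriodic hs).add
        (hspeed.smoothPeriodic hs)).const_mul _).periodic }
  refine (h.smoothPeriodicFamily_radius.hasDerivAt_fCoeff hvel
    (fun s hs => h.hasDerivAt_radius hp hs) n (Ico_mem_nhds ht.1 ht.2)).congr_deriv ?_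
  have hsm := hspeed.smoothPeriodic (Ioo_subset_Ico_self ht)
  rw [fCoeff_const_mul, fCoeff_add hsm.deriv.deriv.continuous hsm.continuous,
    hsm.deriv.fCoeff_deriv, hsm.fCoeff_deriv]
  push_cast
  linear_combination (-(1 / (p : ℂ)) * n ^ 2 * fCoeff (fun θ => k θ t ^ p) n) * Complex.I_sq

lemma fCoeff_curvature_pow (h : IsPCSF p T k ψ) (ht : t ∈ Ico 0 T) (n : ℤ) :
    fCoeff (fun θ => k θ t ^ p) n = ((meanRadius k t ^ p)⁻¹ : ℝ) *
      ((if n = 0 then 1 else 0) - p * fCoeff (deviation k t) n + fCoeff (remainder p k t) n) := by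
  have hdev := (h.smoothPeriodic_deviation ht).const_mul p
  have hspeed : (fun θ => k θ t ^ p) = fun θ =>
      (meanRadius k t ^ p)⁻¹ * ((1 - (p : ℝ) * deviation k t θ) + remainder p k t θ) := by
    funext θ
    have := (h.meanRadius_pos ht).ne'
    rw [remainder]
    field_simp
    ring
  rw [hspeed, fCoeff_const_mul, fCoeff_add ((SmoothPeriodic.const 1).sub hdev).continuous
      (h.smoothPeriodic_remainder ht).continuous,
    fCoeff_sub continuous_const hdev.continuous, fCoeff_const_mul, fCoeff_const]
  simp

lemma hasDerivAt_meanRadius (h : IsPCSF p T k ψ) (hp : 1 ≤ p) (ht : t ∈ Ioo 0 T) :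
    HasDerivAt (meanRadius k)
      (-(1 / (p : ℝ)) * (meanRadius k t ^ p)⁻¹ * (1 + remainderMean p k t)) t := by
  have ht' := Ioo_subset_Ico_self ht
  refine (Complex.reCLM.hasFDerivAt.comp_hasDerivAt t
    (h.hasDerivAt_fCoeff_radius hp ht 0)).congr_deriv ?_
  rw [h.fCoeff_curvature_pow ht', h.fCoeff_deviation ht', fCoeff_zero (remainder p k t),
    if_pos rfl, if_pos rfl, Complex.reCLM_apply, ← mul_assoc, ← Complex.ofReal_mul,
    Complex.re_ofReal_mul]
  simp only [remainderMean, Int.cast_zero, mul_zero, sub_zero, Complex.add_re, Complex.one_re,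
    Complex.ofReal_re]
  ring

lemma hasDerivAt_fCoeff_radius_linearized (h : IsPCSF p T k ψ) (hp : 1 ≤ p) (ht : t ∈ Ioo 0 T)
    {n : ℤ} (hn : n ≠ 0) :
    HasDerivAt (fun s => fCoeff (radius k s) n)
      (-(((n : ℝ) ^ 2 - 1) * (meanRadius k t ^ (p + 1))⁻¹) • fCoeff (radius k t) n
        + (((n : ℝ) ^ 2 - 1) / p * (meanRadius k t ^ p)⁻¹) • fCoeff (remainder p k t) n) t := by
  have ht' := Ioo_subset_Ico_self ht
  refine (h.hasDerivAt_fCoeff_radius hp ht n).congr_deriv ?_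
  have hρ : (meanRadius k t : ℂ) ≠ 0 := Complex.ofReal_ne_zero.2 (h.meanRadius_pos ht').ne'
  have hp0 : (p : ℂ) ≠ 0 := Nat.cast_ne_zero.2 (by lia)
  rw [h.fCoeff_curvature_pow ht', h.fCoeff_deviation ht', if_neg hn, if_neg hn]
  simp only [Complex.real_smul]
  push_cast
  field_simp
  ring

end IsPCSF

/-! ### Decay of the Fourier modes -/

/-- The comparison weight `ρ ^ j * exp (-A ρ)`. The exponential factor does not change the order
of vanishing as `ρ → 0`, but lets the weight absorb relative errors of size `O(ρ)`. -/
noncomputable def decayWeight (k : ℝ → ℝ → ℝ) (j : ℕ) (A t : ℝ) : ℝ :=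
  meanRadius k t ^ j * exp (-(A * meanRadius k t))

/-- The `n`-th Fourier mode of the radius, measured against `decayWeight k j A` and with the
factor `⟨n⟩ ^ m` of `fourierNorm m`. -/
noncomputable def weightedMode (k : ℝ → ℝ → ℝ) (m j : ℕ) (A : ℝ) (n : ℤ) (t : ℝ) : ℂ :=
  (bracket n ^ m / decayWeight k j A t) • fCoeff (radius k t) n

/-- The instantaneous rate `λ` of the weight: `w' = -λ ρ ^ (-(p + 1)) w` for
`w = decayWeight k j A`. -/
noncomputable def decayRate (p : ℕ) (k : ℝ → ℝ → ℝ) (j : ℕ) (A t : ℝ) : ℝ :=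
  (j - A * meanRadius k t) / p * (1 + remainderMean p k t)

/-- At time `t` the nonlinearity is at most `c` times the deviation, and `decayWeight k j A` decays
slowly enough that linear damping beats half of the remaining forcing in every mode `|n| ≥ 2`. The
number `3` is the smallest damping factor `n ^ 2 - 1`. -/
structure DampedAt (p : ℕ) (k : ℝ → ℝ → ℝ) (m j : ℕ) (A t c : ℝ) : Prop where
  nonneg : 0 ≤ c
  two_mul_le_one : 2 * c ≤ 1
  fourierNorm_remainder_le : fourierNorm m (remainder p k t) ≤ c * fourierNorm m (deviation k t)
  decayRate_le : decayRate p k j A t ≤ 3 - 6 * c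

lemma three_le_sq_sub_one {n : ℤ} (hn : 2 ≤ |n|) : 3 ≤ (n : ℝ) ^ 2 - 1 := by
  have hn' : (2 : ℝ) ≤ |(n : ℝ)| := by exact_mod_cast hn
  nlinarith [sq_abs (n : ℝ)]

lemma DampedAt.two_mul_le_sub_decayRate {p m j : ℕ} {k : ℝ → ℝ → ℝ} {A t c : ℝ}
    (hd : DampedAt p k m j A t c) {n : ℤ} (hn : 2 ≤ |n|) :
    2 * (((n : ℝ) ^ 2 - 1) * c) ≤ (n : ℝ) ^ 2 - 1 - decayRate p k j A t := by
  nlinarith [hd.two_mul_le_one, hd.decayRate_le, three_le_sq_sub_one hn]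

namespace IsPCSF

variable {p m j : ℕ} {T t A c : ℝ} {k : ℝ → ℝ → ℝ} {ψ : ℝ → ℝ} {n : ℤ}

lemma decayWeight_pos (h : IsPCSF p T k ψ) (ht : t ∈ Ico 0 T) : 0 < decayWeight k j A t :=
  mul_pos (pow_pos (h.meanRadius_pos ht) j) (exp_pos _)

lemma continuousOn_decayWeight (h : IsPCSF p T k ψ) :
    ContinuousOn (decayWeight k j A) (Ico 0 T) :=
  (h.continuousOn_meanRadius.pow j).mul (h.continuousOn_meanRadius.const_mul A).neg.rexp

lemma hasDerivAt_decayWeight (h : IsPCSF p T k ψ) (hp : 1 ≤ p) (ht : t ∈ Ioo 0 T) :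
    HasDerivAt (decayWeight k j A)
      (-decayRate p k j A t * (meanRadius k t ^ (p + 1))⁻¹ * decayWeight k j A t) t := by
  have hρ := h.meanRadius_pos (Ioo_subset_Ico_self ht)
  have hp0 : (p : ℝ) ≠ 0 := Nat.cast_ne_zero.2 (by lia)
  have hderiv := h.hasDerivAt_meanRadius hp ht
  refine ((hderiv.fun_pow j).fun_mul (hderiv.const_mul A).fun_neg.exp).congr_deriv ?_
  rw [decayWeight, decayRate]
  rcases j with _ | j
  · simp only [Nat.cast_zero]
    field_simp
    ring
  · rw [Nat.add_sub_cancel]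
    field_simp
    ring

lemma norm_weightedMode (h : IsPCSF p T k ψ) (ht : t ∈ Ico 0 T) (hn : n ≠ 0) :
    ‖weightedMode k m j A n t‖ = bracket n ^ m * ‖fCoeff (deviation k t) n‖ *
      meanRadius k t / decayWeight k j A t := by
  have hρ := h.meanRadius_pos ht
  have hw : 0 < decayWeight k j A t := h.decayWeight_pos ht
  have := bracket_pos n
  rw [weightedMode, h.fCoeff_deviation ht, if_neg hn, norm_smul, norm_mul, norm_inv,
    Complex.norm_real, Real.norm_of_nonneg hρ.le, Real.norm_of_nonneg (by positivity)]
  field_simp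

lemma norm_weightedMode_le (h : IsPCSF p T k ψ) (ht : t ∈ Ico 0 T) (hn : n ≠ 0) :
    ‖weightedMode k m j A n t‖ ≤
      fourierNorm m (deviation k t) * meanRadius k t / decayWeight k j A t := by
  have hρ := h.meanRadius_pos ht
  have hw : 0 < decayWeight k j A t := h.decayWeight_pos ht
  rw [h.norm_weightedMode ht hn]
  gcongr
  exact (h.smoothPeriodic_deviation ht).le_fourierNorm m n

lemma fourierNorm_deviation_mul_le_of_weightedMode_le (h : IsPCSF p T k ψ) (ht : t ∈ Ico 0 T)
    {G : ℝ} (hG : ∀ n : ℤ, 2 ≤ |n| → ‖weightedMode k m j A n t‖ ≤ G) :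
    fourierNorm m (deviation k t) * meanRadius k t ≤ G * decayWeight k j A t := by
  have hρ := h.meanRadius_pos ht
  have hw : 0 < decayWeight k j A t := h.decayWeight_pos ht
  have hG0 : 0 ≤ G := (norm_nonneg _).trans (hG 2 (by norm_num))
  rw [← le_div_iff₀ hρ]
  refine fourierNorm_le fun n => ?_
  rcases lt_or_ge |n| 2 with hlow | hhigh
  · rw [h.fCoeff_deviation_eq_zero ht hlow, norm_zero, mul_zero]
    positivity
  · have hmode := hG n hhigh
    rw [h.norm_weightedMode ht (by grind), div_le_iff₀ hw] at hmode
    rwa [le_div_iff₀ hρ]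

lemma hasDerivAt_weightedMode (h : IsPCSF p T k ψ) (hp : 1 ≤ p) (ht : t ∈ Ioo 0 T)
    (hn : n ≠ 0) :
    HasDerivAt (weightedMode k m j A n)
      (-(((n : ℝ) ^ 2 - 1 - decayRate p k j A t) * (meanRadius k t ^ (p + 1))⁻¹) •
          weightedMode k m j A n t
        + (bracket n ^ m / decayWeight k j A t * (((n : ℝ) ^ 2 - 1) / p * (meanRadius k t ^ p)⁻¹)) •
          fCoeff (remainder p k t) n) t := by
  have hw : decayWeight k j A t ≠ 0 := (h.decayWeight_pos (Ioo_subset_Ico_self ht)).ne'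
  have hweight := (hasDerivAt_const t (bracket n ^ m)).fun_div
    (h.hasDerivAt_decayWeight (j := j) (A := A) hp ht) hw
  have hcoeff : bracket n ^ m / decayWeight k j A t *
      (-(((n : ℝ) ^ 2 - 1) * (meanRadius k t ^ (p + 1))⁻¹)) +
      (0 * decayWeight k j A t - bracket n ^ m * (-decayRate p k j A t *
        (meanRadius k t ^ (p + 1))⁻¹ * decayWeight k j A t)) / decayWeight k j A t ^ 2 =
      -(((n : ℝ) ^ 2 - 1 - decayRate p k j A t) * (meanRadius k t ^ (p + 1))⁻¹) *
        (bracket n ^ m / decayWeight k j A t) := by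
    field_simp
    ring
  refine (hweight.fun_smul (h.hasDerivAt_fCoeff_radius_linearized hp ht hn)).congr_deriv ?_
  rw [weightedMode, smul_smul, ← hcoeff]
  module

lemma norm_forcing_le (h : IsPCSF p T k ψ) (hp : 1 ≤ p) (ht : t ∈ Ico 0 T)
    (hd : DampedAt p k m j A t c) {G : ℝ}
    (hG : ∀ n : ℤ, 2 ≤ |n| → ‖weightedMode k m j A n t‖ ≤ G) (hn : 2 ≤ |n|) :
    ‖(bracket n ^ m / decayWeight k j A t * (((n : ℝ) ^ 2 - 1) / p * (meanRadius k t ^ p)⁻¹)) •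
        fCoeff (remainder p k t) n‖ ≤
      ((n : ℝ) ^ 2 - 1 - decayRate p k j A t) * (meanRadius k t ^ (p + 1))⁻¹ * (G / 2) := by
  have hρ := h.meanRadius_pos ht
  have hw : 0 < decayWeight k j A t := h.decayWeight_pos ht
  have hN : 0 ≤ (n : ℝ) ^ 2 - 1 := by linarith [three_le_sq_sub_one hn]
  have hp1 : (1 : ℝ) ≤ p := Nat.one_le_cast.2 hp
  have hc := hd.nonneg
  have hG0 : 0 ≤ G := (norm_nonneg _).trans (hG n hn)
  have := bracket_pos n
  have hdev : fourierNorm m (deviation k t) ≤ G * decayWeight k j A t / meanRadius k t :=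
    (le_div_iff₀ hρ).2 (h.fourierNorm_deviation_mul_le_of_weightedMode_le ht hG)
  have hrem : bracket n ^ m * ‖fCoeff (remainder p k t) n‖ ≤
      c * (G * decayWeight k j A t / meanRadius k t) :=
    ((h.smoothPeriodic_remainder ht).le_fourierNorm m n).trans
      (hd.fourierNorm_remainder_le.trans (mul_le_mul_of_nonneg_left hdev hc))
  rw [norm_smul, Real.norm_of_nonneg (by positivity)]
  calc bracket n ^ m / decayWeight k j A t * (((n : ℝ) ^ 2 - 1) / p * (meanRadius k t ^ p)⁻¹) *
        ‖fCoeff (remainder p k t) n‖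
      = ((n : ℝ) ^ 2 - 1) / p * (meanRadius k t ^ p)⁻¹ / decayWeight k j A t *
          (bracket n ^ m * ‖fCoeff (remainder p k t) n‖) := by ring
    _ ≤ ((n : ℝ) ^ 2 - 1) / 1 * (meanRadius k t ^ p)⁻¹ / decayWeight k j A t *
          (c * (G * decayWeight k j A t / meanRadius k t)) := by gcongr
    _ = 2 * (((n : ℝ) ^ 2 - 1) * c) * (meanRadius k t ^ (p + 1))⁻¹ * (G / 2) := by
        field_simp
        ring
    _ ≤ _ := by
        gcongr
        exact hd.two_mul_le_sub_decayRate hn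

lemma exists_norm_weightedMode_le (h : IsPCSF p T k ψ) {t₀ t₁ : ℝ} (h0 : 0 ≤ t₀) (h1 : t₁ < T) :
    ∃ K, ∀ n ≠ 0, ∀ t ∈ Icc t₀ t₁, ‖weightedMode k m j A n t‖ ≤ K := by
  have hsub : Icc t₀ t₁ ⊆ Ico 0 T := fun s hs => ⟨h0.trans hs.1, hs.2.trans_lt h1⟩
  have hcont := ((h.continuousOn_fourierNorm_deviation m).mul h.continuousOn_meanRadius).div
    h.continuousOn_decayWeight fun t ht => (h.decayWeight_pos (j := j) (A := A) ht).ne'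
  obtain ⟨K, hK⟩ := isCompact_Icc.exists_bound_of_continuousOn (hcont.mono hsub)
  exact ⟨K, fun n hn t ht => (h.norm_weightedMode_le (hsub ht) hn).trans
    ((le_abs_self _).trans (hK t ht))⟩

lemma fourierNorm_deviation_mul_le_of_dampedAt (h : IsPCSF p T k ψ) (hp : 1 ≤ p) {t₀ t₁ : ℝ}
    (h0 : 0 ≤ t₀) (h1 : t₁ < T) (hd : ∀ t ∈ Ioo t₀ t₁, ∃ c, DampedAt p k m j A t c) :
    ∀ t ∈ Icc t₀ t₁, fourierNorm m (deviation k t) * meanRadius k t ≤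
      fourierNorm m (deviation k t₀) * meanRadius k t₀ / decayWeight k j A t₀ *
        decayWeight k j A t := by
  intro t ht
  have hsub : Icc t₀ t₁ ⊆ Ico 0 T := fun s hs => ⟨h0.trans hs.1, hs.2.trans_lt h1⟩
  have hsub' : Ioo t₀ t₁ ⊆ Ioo 0 T := Ioo_subset_Ioo h0 h1.le
  have ht₀ : t₀ ∈ Ico 0 T := hsub (left_mem_Icc.2 (ht.1.trans ht.2))
  have hn0 (n : {n : ℤ // 2 ≤ |n|}) : (n : ℤ) ≠ 0 := by grind
  obtain ⟨K, hK⟩ := h.exists_norm_weightedMode_le (m := m) (j := j) (A := A) h0 h1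
  have hmodes := norm_le_of_forall_hasDerivAt_neg_smul_add
    (g := fun n : {n : ℤ // 2 ≤ |n|} => weightedMode k m j A n)
    (B := fourierNorm m (deviation k t₀) * meanRadius k t₀ / decayWeight k j A t₀)
    (fun n => ((continuousOn_const.div h.continuousOn_decayWeight
      fun t ht => (h.decayWeight_pos ht).ne').smul
        (h.smoothPeriodicFamily_radius.continuousOn_fCoeff (uniqueDiffOn_Ico 0 T) n)).mono hsub)
    (fun n s hs => h.hasDerivAt_weightedMode hp (hsub' hs) (hn0 n))
    (fun n s hs => ?_) (fun s hs G hG n => ?_) (fun n => hK n (hn0 n)) ?_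
    (fun n => h.norm_weightedMode_le ht₀ (hn0 n))
  · exact h.fourierNorm_deviation_mul_le_of_weightedMode_le (hsub ht)
      fun n hn => hmodes ⟨n, hn⟩ t ht
  · obtain ⟨c, hc⟩ := hd s hs
    have hρ := h.meanRadius_pos (hsub (Ioo_subset_Icc_self hs))
    have hN := three_le_sq_sub_one n.2
    have hc0 := hc.nonneg
    exact mul_nonneg (le_trans (by positivity) (hc.two_mul_le_sub_decayRate n.2)) (by positivity)
  · obtain ⟨c, hc⟩ := hd s hs
    exact h.norm_forcing_le hp (hsub (Ioo_subset_Icc_self hs)) hc (fun n hn => hG ⟨n, hn⟩) n.2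
  · have := fourierNorm_nonneg m (deviation k t₀)
    have := h.meanRadius_pos ht₀
    have : 0 < decayWeight k j A t₀ := h.decayWeight_pos ht₀
    positivity

end IsPCSF

/-! ### Stability of the circle -/

/-- Below the threshold `η` the nonlinear part of the speed is a small multiple of the deviation.
The factor `1 / 12` leaves room for the decay `ρ ^ 2` in `DampedAt`. -/
structure IsThreshold (p : ℕ) (η : ℝ) : Prop where
  pos : 0 < η
  productConst_mul_le_one : 4 * productConst 2 * η ≤ 1
  fourierNorm_pow_sub_linear_le : ∀ ε κ : ℝ → ℝ, IsSmallReciprocal 2 ε κ → fourierNorm 2 ε ≤ η →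
    fourierNorm 2 (fun θ => κ θ ^ p - 1 + p * ε θ) ≤ 1 / 12 * fourierNorm 2 ε

lemma exists_isThreshold (p : ℕ) : ∃ η, IsThreshold p η := by
  obtain ⟨η, hpos, hle, hpow⟩ :=
    exists_threshold_fourierNorm_two_pow_sub_linear_le p (show (0 : ℝ) < 1 / 12 by norm_num)
  exact ⟨η, hpos, hle, hpow⟩

lemma IsThreshold.le_quarter {p : ℕ} {η : ℝ} (hη : IsThreshold p η) : η ≤ 1 / 4 := by
  nlinarith [hη.pos, hη.productConst_mul_le_one, one_le_productConst 2]

lemma IsThreshold.productConst_mul_le {p : ℕ} {η x : ℝ} (hη : IsThreshold p η) (hx : x ≤ η) :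
    4 * productConst 2 * x ≤ 1 := by
  nlinarith [hη.productConst_mul_le_one, one_le_productConst 2]

/-- The a priori estimates of a solution close to a shrinking circle: the deviation is small and,
like the mean of the nonlinear part, vanishes linearly in the mean radius. -/
structure NearlyCircular (p : ℕ) (T : ℝ) (k : ℝ → ℝ → ℝ) (K : ℝ) : Prop where
  productConst_mul_le_one : ∀ t ∈ Ico 0 T, 4 * productConst 2 * fourierNorm 2 (deviation k t) ≤ 1
  fourierNorm_deviation_le : ∀ t ∈ Ico 0 T, fourierNorm 2 (deviation k t) ≤ K * meanRadius k t
  abs_remainderMean_le_quarter : ∀ t ∈ Ico 0 T, |remainderMean p k t| ≤ 1 / 4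
  abs_remainderMean_le : ∀ t ∈ Ico 0 T, |remainderMean p k t| ≤ K * meanRadius k t

namespace IsPCSF

variable {p m : ℕ} {T t η K : ℝ} {k : ℝ → ℝ → ℝ} {ψ : ℝ → ℝ}

lemma fourierNorm_remainder_le_of_isThreshold (h : IsPCSF p T k ψ) (hη : IsThreshold p η)
    (ht : t ∈ Ico 0 T) (hsmall : fourierNorm 2 (deviation k t) ≤ η) :
    fourierNorm 2 (remainder p k t) ≤ 1 / 12 * fourierNorm 2 (deviation k t) :=
  hη.fourierNorm_pow_sub_linear_le _ _
    (h.isSmallReciprocal_deviation ht le_rfl (hη.productConst_mul_le hsmall)) hsmall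

lemma abs_remainderMean_le_of_isThreshold (h : IsPCSF p T k ψ) (hη : IsThreshold p η)
    (ht : t ∈ Ico 0 T) (hsmall : fourierNorm 2 (deviation k t) ≤ η) :
    |remainderMean p k t| ≤ 1 / 12 * fourierNorm 2 (deviation k t) :=
  (h.abs_remainderMean_le ht).trans (h.fourierNorm_remainder_le_of_isThreshold hη ht hsmall)

lemma abs_remainderMean_le_quarter_of_isThreshold (h : IsPCSF p T k ψ) (hη : IsThreshold p η)
    (ht : t ∈ Ico 0 T) (hsmall : fourierNorm 2 (deviation k t) ≤ η) :
    |remainderMean p k t| ≤ 1 / 4 := by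
  linarith [h.abs_remainderMean_le_of_isThreshold hη ht hsmall, hη.le_quarter]

lemma dampedAt_of_isThreshold (h : IsPCSF p T k ψ) (hp : 1 ≤ p) (hη : IsThreshold p η)
    (ht : t ∈ Ico 0 T) (hsmall : fourierNorm 2 (deviation k t) ≤ η) :
    DampedAt p k 2 2 0 t (1 / 12) where
  nonneg := by norm_num
  two_mul_le_one := by norm_num
  fourierNorm_remainder_le := h.fourierNorm_remainder_le_of_isThreshold hη ht hsmall
  decayRate_le := by
    have hmean := abs_le.1 (h.abs_remainderMean_le_quarter_of_isThreshold hη ht hsmall)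
    have hdiv : (2 : ℝ) / p ≤ 2 := div_le_self zero_le_two (Nat.one_le_cast.2 hp)
    rw [decayRate, zero_mul, sub_zero, Nat.cast_ofNat]
    nlinarith

lemma meanRadius_le_of_neg_one_le_remainderMean (h : IsPCSF p T k ψ) (hp : 1 ≤ p)
    (ht : t ∈ Ico 0 T) (hmean : ∀ s ∈ Ioo 0 t, -1 ≤ remainderMean p k s) :
    meanRadius k t ≤ meanRadius k 0 := by
  have hsub : Ioo 0 t ⊆ Ioo 0 T := Ioo_subset_Ioo_right ht.2.le
  refine antitoneOn_of_hasDerivWithinAt_nonpos (convex_Icc 0 t)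
    (h.continuousOn_meanRadius.mono fun s hs => ⟨hs.1, hs.2.trans_lt ht.2⟩)
    (f' := fun s => -(1 / (p : ℝ)) * (meanRadius k s ^ p)⁻¹ * (1 + remainderMean p k s))
    (fun s hs => ?_) (fun s hs => ?_) (left_mem_Icc.2 ht.1) (right_mem_Icc.2 ht.1) ht.1
  · rw [interior_Icc] at hs
    exact (h.hasDerivAt_meanRadius hp (hsub hs)).hasDerivWithinAt
  · rw [interior_Icc] at hs
    have hρ := h.meanRadius_pos (Ioo_subset_Ico_self (hsub hs))
    have hspeed : 0 ≤ 1 / (p : ℝ) * (meanRadius k s ^ p)⁻¹ := by positivity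
    nlinarith [hmean s hs]

lemma fourierNorm_deviation_le_of_isThreshold (h : IsPCSF p T k ψ) (hp : 1 ≤ p)
    (hη : IsThreshold p η) (ht : t ∈ Ico 0 T)
    (hsmall : ∀ s ∈ Icc 0 t, fourierNorm 2 (deviation k s) ≤ η) :
    fourierNorm 2 (deviation k t) ≤
      fourierNorm 2 (deviation k 0) / meanRadius k 0 * meanRadius k t := by
  have hρ := h.meanRadius_pos ht
  have hρ₀ := h.meanRadius_pos (left_mem_Ico.2 (ht.1.trans_lt ht.2))
  have hdecay := h.fourierNorm_deviation_mul_le_of_dampedAt (m := 2) (j := 2) (A := 0) hp le_rfl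
    ht.2 (fun s hs => ⟨1 / 12, h.dampedAt_of_isThreshold hp hη ⟨hs.1.le, hs.2.trans ht.2⟩
      (hsmall s (Ioo_subset_Icc_self hs))⟩) t (right_mem_Icc.2 ht.1)
  rw [decayWeight, decayWeight, zero_mul, zero_mul, neg_zero, exp_zero, mul_one, mul_one] at hdecay
  refine le_of_mul_le_mul_right (hdecay.trans_eq ?_) hρ
  field_simp

lemma fourierNorm_deviation_le_half_threshold (h : IsPCSF p T k ψ) (hp : 1 ≤ p)
    (hη : IsThreshold p η) (hinit : fourierNorm 2 (deviation k 0) ≤ η / 2) :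
    ∀ t ∈ Ico 0 T, fourierNorm 2 (deviation k t) ≤ η / 2 := by
  refine le_of_continuousOn_of_bootstrap (h.continuousOn_fourierNorm_deviation 2)
    (half_lt_self hη.pos) hinit fun t ht hsmall => ?_
  have hρ₀ := h.meanRadius_pos (left_mem_Ico.2 (ht.1.trans_lt ht.2))
  have hε₀ := fourierNorm_nonneg 2 (deviation k 0)
  have hρ : meanRadius k t ≤ meanRadius k 0 :=
    h.meanRadius_le_of_neg_one_le_remainderMean hp ht fun s hs => by
      linarith [(abs_le.1 (h.abs_remainderMean_le_quarter_of_isThreshold hη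
        ⟨hs.1.le, hs.2.trans ht.2⟩ (hsmall s (Ioo_subset_Icc_self hs)))).1]
  calc fourierNorm 2 (deviation k t)
      ≤ fourierNorm 2 (deviation k 0) / meanRadius k 0 * meanRadius k t :=
        h.fourierNorm_deviation_le_of_isThreshold hp hη ht hsmall
    _ ≤ fourierNorm 2 (deviation k 0) / meanRadius k 0 * meanRadius k 0 := by gcongr
    _ = fourierNorm 2 (deviation k 0) := div_mul_cancel₀ _ hρ₀.ne'
    _ ≤ η / 2 := hinit

lemma nearlyCircular (h : IsPCSF p T k ψ) (hp : 1 ≤ p) (hη : IsThreshold p η)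
    (hinit : fourierNorm 2 (deviation k 0) ≤ η / 2) :
    NearlyCircular p T k (fourierNorm 2 (deviation k 0) / meanRadius k 0) := by
  have hsmall (t : ℝ) (ht : t ∈ Ico 0 T) : fourierNorm 2 (deviation k t) ≤ η :=
    (h.fourierNorm_deviation_le_half_threshold hp hη hinit t ht).trans (half_le_self hη.pos.le)
  have hlinear (t : ℝ) (ht : t ∈ Ico 0 T) : fourierNorm 2 (deviation k t) ≤
      fourierNorm 2 (deviation k 0) / meanRadius k 0 * meanRadius k t :=
    h.fourierNorm_deviation_le_of_isThreshold hp hη ht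
      fun s hs => hsmall s ⟨hs.1, hs.2.trans_lt ht.2⟩
  refine ⟨fun t ht => hη.productConst_mul_le (hsmall t ht), hlinear,
    fun t ht => h.abs_remainderMean_le_quarter_of_isThreshold hη ht (hsmall t ht),
    fun t ht => ?_⟩
  linarith [h.abs_remainderMean_le_of_isThreshold hη ht (hsmall t ht), hlinear t ht,
    fourierNorm_nonneg 2 (deviation k t)]

/-! ### Rate of extinction -/

lemma meanRadius_mul_curvature_le (h : IsPCSF p T k ψ) (hN : NearlyCircular p T k K)
    (ht : t ∈ Ico 0 T) (θ : ℝ) : meanRadius k t * k θ t ≤ bracketSum * 2 := by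
  have hrec := h.isSmallReciprocal_deviation ht le_rfl (hN.productConst_mul_le_one t ht)
  have hsmooth := (h.smoothPeriodicFamily_curvature.smoothPeriodic ht).const_mul (meanRadius k t)
  calc meanRadius k t * k θ t ≤ |meanRadius k t * k θ t| := le_abs_self _
    _ ≤ bracketSum * fourierNorm 2 (fun θ => meanRadius k t * k θ t) := hsmooth.abs_le_fourierNorm θ
    _ ≤ bracketSum * 2 := mul_le_mul_of_nonneg_left hrec.fourierNorm_two_reciprocal_le
        (zero_le_one.trans one_le_bracketSum)

lemma tendsto_meanRadius (h : IsPCSF p T k ψ) (hT : 0 < T) (hN : NearlyCircular p T k K) :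
    Tendsto (meanRadius k) (𝓝[<] T) (𝓝 0) := by
  have hblowup := h.2.2.2.2.2.2.2.2.1
  have hmem : ∀ᶠ t in 𝓝[<] T, t ∈ Ico 0 T :=
    mem_of_superset (Ioo_mem_nhdsLT hT) Ioo_subset_Ico_self
  refine squeeze_zero' (hmem.mono fun t ht => (h.meanRadius_pos ht).le) ?_
    (hblowup.const_div_atTop (bracketSum * 2))
  filter_upwards [hmem, hblowup.eventually_gt_atTop 0] with t ht hpos
  have hρ := h.meanRadius_pos ht
  have : Nonempty (Icc (0 : ℝ) (2 * π)) := ⟨⟨0, le_rfl, by positivity⟩⟩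
  rw [le_div_comm₀ hρ hpos]
  exact ciSup_le fun θ => (le_div_iff₀' hρ).2 (h.meanRadius_mul_curvature_le hN ht θ)

lemma hasDerivAt_meanRadius_pow_succ (h : IsPCSF p T k ψ) (hp : 1 ≤ p) (ht : t ∈ Ioo 0 T) :
    HasDerivAt (fun s => meanRadius k s ^ (p + 1))
      (-(((p : ℝ) + 1) / p * (1 + remainderMean p k t))) t := by
  have hρ := h.meanRadius_pos (Ioo_subset_Ico_self ht)
  refine ((h.hasDerivAt_meanRadius hp ht).fun_pow (p + 1)).congr_deriv ?_
  rw [Nat.add_sub_cancel]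
  push_cast
  field_simp

lemma monotoneOn_meanRadius_pow_add (h : IsPCSF p T k ψ) (hp : 1 ≤ p)
    (hN : NearlyCircular p T k K) :
    MonotoneOn (fun s => meanRadius k s ^ (p + 1) + 3 * s) (Ico 0 T) := by
  refine monotoneOn_of_hasDerivWithinAt_nonneg (convex_Ico 0 T)
    ((h.continuousOn_meanRadius.pow _).add (by fun_prop))
    (f' := fun s => -(((p : ℝ) + 1) / p * (1 + remainderMean p k s)) + 3 * 1)
    (fun s hs => ?_) (fun s hs => ?_)
  · rw [interior_Ico] at hs
    exact ((h.hasDerivAt_meanRadius_pow_succ hp hs).add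
      ((hasDerivAt_id s).const_mul 3)).hasDerivWithinAt
  · rw [interior_Ico] at hs
    have hp1 : (1 : ℝ) ≤ p := Nat.one_le_cast.2 hp
    have hratio : ((p : ℝ) + 1) / p ≤ 2 := by rw [div_le_iff₀ (by linarith)]; linarith
    have hmean := abs_le.1 (hN.abs_remainderMean_le_quarter s (Ioo_subset_Ico_self hs))
    nlinarith

lemma meanRadius_pow_le (h : IsPCSF p T k ψ) (hp : 1 ≤ p) (hN : NearlyCircular p T k K)
    (ht : t ∈ Ico 0 T) : meanRadius k t ^ (p + 1) ≤ 3 * (T - t) := by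
  have hlim : Tendsto (fun s => meanRadius k s ^ (p + 1) + 3 * s) (𝓝[<] T)
      (𝓝 (0 ^ (p + 1) + 3 * T)) :=
    ((h.tendsto_meanRadius (ht.1.trans_lt ht.2) hN).pow _).add
      ((continuous_const_mul 3).continuousAt.tendsto.mono_left nhdsWithin_le_nhds)
  have hle : meanRadius k t ^ (p + 1) + 3 * t ≤ 0 ^ (p + 1) + 3 * T :=
    ge_of_tendsto hlim <| mem_of_superset (Ioo_mem_nhdsLT ht.2) fun s hs =>
      h.monotoneOn_meanRadius_pow_add hp hN ht ⟨ht.1.trans hs.1.le, hs.2⟩ hs.1.le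
  rw [zero_pow p.succ_ne_zero] at hle
  linarith

end IsPCSF

/-! ### The sharp rate -/

lemma exists_forall_le_mul_rpow_of_tail {f : ℝ → ℝ} {a b T α B : ℝ} (hf : ContinuousOn f (Icc a b))
    (hb : b < T) (htail : ∀ t ∈ Ico b T, f t ≤ B * (T - t) ^ α) :
    ∃ M > 0, ∀ t ∈ Ico a T, f t ≤ M * (T - t) ^ α := by
  have hpos {t : ℝ} (ht : t < T) : 0 < (T - t) ^ α := rpow_pos_of_pos (sub_pos.2 ht) α
  have hcont : ContinuousOn (fun t => f t / (T - t) ^ α) (Icc a b) :=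
    hf.div (ContinuousOn.rpow_const (by fun_prop)
      fun t ht => .inl (sub_pos.2 (ht.2.trans_lt hb)).ne') fun t ht => (hpos (ht.2.trans_lt hb)).ne'
  obtain ⟨D, hD⟩ := isCompact_Icc.exists_bound_of_continuousOn hcont
  refine ⟨max 1 (max D B), by positivity, fun t ht => ?_⟩
  rcases le_or_gt t b with hle | hlt
  · have hquot : f t / (T - t) ^ α ≤ max 1 (max D B) :=
      ((le_abs_self _).trans (hD t ⟨ht.1, hle⟩)).trans (by simp)
    exact (div_le_iff₀ (hpos ht.2)).1 hquot
  · exact (htail t ⟨hlt.le, ht.2⟩).trans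
      (mul_le_mul_of_nonneg_right (by simp) (hpos ht.2).le)

namespace IsPCSF

variable {p m : ℕ} {T t K C : ℝ} {k : ℝ → ℝ → ℝ} {ψ : ℝ → ℝ}

lemma nearlyCircular_const_nonneg (h : IsPCSF p T k ψ) (hT : 0 < T) (hN : NearlyCircular p T k K) :
    0 ≤ K :=
  nonneg_of_mul_nonneg_left ((fourierNorm_nonneg 2 _).trans
    (hN.fourierNorm_deviation_le 0 (left_mem_Ico.2 hT))) (h.meanRadius_pos (left_mem_Ico.2 hT))

/-- The weight `ρ ^ (3 p)` alone decays exactly at the linear rate `3` of the modes `n = ±2`; the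
correction `exp (-A ρ)` pays for the `O(ρ)` errors. -/
lemma dampedAt_of_nearlyCircular (h : IsPCSF p T k ψ) (hp : 1 ≤ p) (hN : NearlyCircular p T k K)
    (ht : t ∈ Ico 0 T) (hC : 0 < C) (hrem : fourierNorm m (remainder p k t) ≤
      C * (fourierNorm 2 (deviation k t) * fourierNorm m (deviation k t)))
    (hsmall : 2 * (C * (K * meanRadius k t)) ≤ 1) :
    DampedAt p k m (3 * p) (p * (4 * K + 8 * (C * K))) t (C * (K * meanRadius k t)) := by
  have hρ := h.meanRadius_pos ht
  have hK := h.nearlyCircular_const_nonneg (ht.1.trans_lt ht.2) hN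
  have hε := fourierNorm_nonneg m (deviation k t)
  refine ⟨by positivity, hsmall, hrem.trans ?_, ?_⟩
  · rw [mul_assoc]
    gcongr
    exact hN.fourierNorm_deviation_le t ht
  · have hp0 : (p : ℝ) ≠ 0 := Nat.cast_ne_zero.2 (by lia)
    have hrate : decayRate p k (3 * p) (p * (4 * K + 8 * (C * K))) t =
        (3 - (4 * K + 8 * (C * K)) * meanRadius k t) * (1 + remainderMean p k t) := by
      rw [decayRate]
      push_cast
      field_simp
    have hquarter := abs_le.1 (hN.abs_remainderMean_le_quarter t ht)
    have hlinear := abs_le.1 (hN.abs_remainderMean_le t ht)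
    have hgain : (4 * K + 8 * (C * K)) * meanRadius k t * (3 / 4) ≤
        (4 * K + 8 * (C * K)) * meanRadius k t * (1 + remainderMean p k t) :=
      mul_le_mul_of_nonneg_left (by linarith) (by positivity)
    rw [hrate]
    linarith

lemma exists_forall_meanRadius_mul_le_one (h : IsPCSF p T k ψ) (hT : 0 < T)
    (hN : NearlyCircular p T k K) (a b : ℝ) :
    ∃ t₀ ∈ Ico 0 T, ∀ t ∈ Ico t₀ T, a * meanRadius k t ≤ 1 ∧ b * meanRadius k t ≤ 1 := by
  have hle (c : ℝ) : ∀ᶠ t in 𝓝[<] T, c * meanRadius k t ≤ 1 :=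
    ((h.tendsto_meanRadius hT hN).const_mul c).eventually_le_const (by simp)
  have hpos : ∀ᶠ t in 𝓝[<] T, 0 ≤ t :=
    mem_of_superset (Ioo_mem_nhdsLT hT) fun t ht => ht.1.le
  obtain ⟨t₀, ht₀, hsub⟩ := mem_nhdsLT_iff_exists_Ico_subset.1 (hpos.and ((hle a).and (hle b)))
  exact ⟨t₀, ⟨(hsub (left_mem_Ico.2 ht₀)).1, ht₀⟩, fun t ht => (hsub ht).2⟩

lemma exists_fourierNorm_deviation_mul_le (h : IsPCSF p T k ψ) (hp : 1 ≤ p) (hT : 0 < T)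
    (hN : NearlyCircular p T k K) (hm : 2 ≤ m) :
    ∃ t₀ ∈ Ico 0 T, ∃ B ≥ 0, ∀ t ∈ Ico t₀ T,
      4 * productConst m * fourierNorm 2 (deviation k t) ≤ 1 ∧
      fourierNorm m (deviation k t) * meanRadius k t ≤ B * meanRadius k t ^ (3 * p) := by
  obtain ⟨C, hC, hrem⟩ := exists_fourierNorm_pow_sub_linear_le m p
  obtain ⟨t₀, ht₀, hρsmall⟩ := h.exists_forall_meanRadius_mul_le_one hT hN
    (4 * productConst m * K) (2 * (C * K))
  have hsub {s : ℝ} (hs : s ∈ Ico t₀ T) : s ∈ Ico 0 T := ⟨ht₀.1.trans hs.1, hs.2⟩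
  have hK := h.nearlyCircular_const_nonneg hT hN
  have hD : 0 ≤ productConst m := zero_le_one.trans (one_le_productConst m)
  have hε (s : ℝ) (hs : s ∈ Ico t₀ T) :
      4 * productConst m * fourierNorm 2 (deviation k s) ≤ 1 := by
    refine le_trans ?_ (hρsmall s hs).1
    rw [mul_assoc _ K]
    gcongr
    exact hN.fourierNorm_deviation_le s (hsub hs)
  have hweight : 0 < decayWeight k (3 * p) (p * (4 * K + 8 * (C * K))) t₀ := h.decayWeight_pos ht₀
  have hB : 0 ≤ fourierNorm m (deviation k t₀) * meanRadius k t₀ /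
      decayWeight k (3 * p) (p * (4 * K + 8 * (C * K))) t₀ :=
    div_nonneg (mul_nonneg (fourierNorm_nonneg m _) (h.meanRadius_pos ht₀).le) hweight.le
  refine ⟨t₀, ht₀, _, hB, fun t ht => ⟨hε t ht, ?_⟩⟩
  have hρ := h.meanRadius_pos (hsub ht)
  refine (h.fourierNorm_deviation_mul_le_of_dampedAt hp ht₀.1 ht.2 (fun s hs => ?_) t
    (right_mem_Icc.2 ht.1)).trans (mul_le_mul_of_nonneg_left ?_ hB)
  · have hs' : s ∈ Ico t₀ T := ⟨hs.1.le, hs.2.trans ht.2⟩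
    exact ⟨_, h.dampedAt_of_nearlyCircular hp hN (hsub hs') hC
      (hrem _ _ (h.isSmallReciprocal_deviation (hsub hs') hm (hε s hs')))
      (by linarith [(hρsmall s hs').2])⟩
  · exact mul_le_of_le_one_right (by positivity) (exp_le_one_iff.2 (neg_nonpos.2 (by positivity)))

lemma meanRadius_pow_le_rpow (h : IsPCSF p T k ψ) (hp : 1 ≤ p) (hN : NearlyCircular p T k K)
    (ht : t ∈ Ico 0 T) :
    meanRadius k t ^ (3 * p - 2) ≤
      (3 * (T - t)) ^ ((3 * (p : ℝ) - 2) / ((p : ℝ) + 1)) := by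
  have hρ := h.meanRadius_pos ht
  have hp1 : (1 : ℝ) ≤ p := Nat.one_le_cast.2 hp
  have hexp : ((3 * p - 2 : ℕ) : ℝ) = ((p + 1 : ℕ) : ℝ) * ((3 * (p : ℝ) - 2) / ((p : ℝ) + 1)) := by
    rw [Nat.cast_sub (by lia)]
    push_cast
    field_simp
  rw [← rpow_natCast, hexp, rpow_mul hρ.le, rpow_natCast]
  exact rpow_le_rpow (by positivity) (h.meanRadius_pow_le hp hN ht)
    (div_nonneg (by linarith) (by linarith))

lemma fourierNorm_curvature_sub_circleMean_le (h : IsPCSF p T k ψ) (ht : t ∈ Ico 0 T)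
    (hm : 2 ≤ m) (hsmall : 4 * productConst m * fourierNorm 2 (deviation k t) ≤ 1) :
    fourierNorm m (fun θ => k θ t - circleMean (k · t)) ≤
      2 * (meanRadius k t)⁻¹ * fourierNorm m (deviation k t) := by
  simpa only [meanRadius, deviation, radius, inv_inv] using
    (h.smoothPeriodic_radius ht).fourierNorm_inv_sub_circleMean_le (h.radius_pos ht) hm hsmall

lemma exists_fourierNorm_curvature_sub_circleMean_le (h : IsPCSF p T k ψ) (hp : 1 ≤ p)
    (hT : 0 < T) (hN : NearlyCircular p T k K) (hm : 2 ≤ m) :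
    ∃ M > 0, ∀ t ∈ Ico 0 T, fourierNorm m (fun θ => k θ t - circleMean (k · t)) ≤
      M * (T - t) ^ ((3 * (p : ℝ) - 2) / ((p : ℝ) + 1)) := by
  obtain ⟨t₀, ht₀, B, hB, hdecay⟩ := h.exists_fourierNorm_deviation_mul_le hp hT hN hm
  have hcont := h.smoothPeriodicFamily_curvature.continuousOn_fourierNorm_sub_circleMean
    (uniqueDiffOn_Ico 0 T) m
  refine exists_forall_le_mul_rpow_of_tail
    (B := 2 * B * 3 ^ ((3 * (p : ℝ) - 2) / ((p : ℝ) + 1)))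
    (hcont.mono fun t ht => ⟨ht.1, ht.2.trans_lt ht₀.2⟩) ht₀.2 fun t ht => ?_
  have ht' : t ∈ Ico 0 T := ⟨ht₀.1.trans ht.1, ht.2⟩
  have hρ := h.meanRadius_pos ht'
  have hpow : meanRadius k t ^ (3 * p) = meanRadius k t ^ (3 * p - 2) * meanRadius k t ^ 2 := by
    rw [← pow_add, Nat.sub_add_cancel (by lia)]
  calc fourierNorm m (fun θ => k θ t - circleMean (k · t))
      ≤ 2 * (meanRadius k t)⁻¹ * fourierNorm m (deviation k t) :=
        h.fourierNorm_curvature_sub_circleMean_le ht' hm (hdecay t ht).1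
    _ = 2 * (fourierNorm m (deviation k t) * meanRadius k t) / meanRadius k t ^ 2 := by field_simp
    _ ≤ 2 * (B * meanRadius k t ^ (3 * p)) / meanRadius k t ^ 2 := by
        gcongr 2 * ?_ / _
        exact (hdecay t ht).2
    _ = 2 * B * meanRadius k t ^ (3 * p - 2) := by rw [hpow]; field_simp
    _ ≤ 2 * B * (3 * (T - t)) ^ ((3 * (p : ℝ) - 2) / ((p : ℝ) + 1)) := by
        gcongr
        exact h.meanRadius_pow_le_rpow hp hN ht'
    _ = _ := by rw [mul_rpow zero_le_three (sub_nonneg.2 ht.2.le), ← mul_assoc]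

lemma fourierNorm_deviation_zero_le (h : IsPCSF p T k ψ) {η : ℝ} (hη : IsThreshold p η)
    (hψ : 16 / η * seminorm2 ψ ≤ circleMean ψ) : fourierNorm 2 (deviation k 0) ≤ η / 2 := by
  obtain ⟨-, -, -, -, hinit, hsmooth, hpos, hper, -⟩ := h
  have hsm : SmoothPeriodic ψ := ⟨hsmooth, hper⟩
  have hmean := circleMean_pos hsm.continuous hpos
  have hrel : fourierNorm 2 (relDeviation ψ) ≤ η / 8 := by
    rw [fourierNorm_relDeviation hmean, inv_mul_le_iff₀ hmean]
    refine hsm.fourierNorm_two_sub_circleMean_le_seminorm2.trans ?_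
    have hη0 := hη.pos
    have hmul := mul_le_mul_of_nonneg_right hψ (show 0 ≤ η / 8 by positivity)
    refine le_trans (le_of_eq ?_) hmul
    field_simp
    ring
  have hinv := hsm.fourierNorm_relDeviation_inv_le hpos le_rfl
    (hη.productConst_mul_le (hrel.trans (by linarith [hη.pos])))
  have hdev : deviation k 0 = relDeviation fun θ => (ψ θ)⁻¹ :=
    congrArg relDeviation (funext fun θ => by rw [radius, hinit])
  rw [hdev]
  linarith

end IsPCSF

/-- There is `c_p > 0` depending only on `p` such that if `ψ̂(0) ≥ c_p ‖ψ‖₂`,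
then for every `l` there is `M_{p,l} > 0` with
`‖k(·,t) - k̂(0,t)‖_{C^l[0,2π]} ≤ M_{p,l}(T-t)^{(3p-2)/(p+1)}` for all `t ∈ [0,T)`. -/
theorem statement12 (p : ℕ) (hp : 1 ≤ p) :
    ∃ cp > (0:ℝ), ∀ (T : ℝ), 0 < T → ∀ (k : ℝ → ℝ → ℝ) (ψ : ℝ → ℝ),
      IsPCSF p T k ψ →
      cp * seminorm2 ψ ≤ (fCoeff ψ 0).re →
      ∀ l : ℕ, ∃ M > (0:ℝ), ∀ t : ℝ, 0 ≤ t → t < T →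
        ClNorm l (fun θ => k θ t - (fCoeff (fun x => k x t) 0).re)
          ≤ M * (T - t) ^ ((3 * (p : ℝ) - 2) / ((p : ℝ) + 1)) := by
  obtain ⟨η, hη⟩ := exists_isThreshold p
  refine ⟨16 / η, div_pos (by norm_num) hη.pos, fun T hT k ψ h hψ l => ?_⟩
  have hN := h.nearlyCircular hp hη (h.fourierNorm_deviation_zero_le hη hψ)
  obtain ⟨M, hM, hrate⟩ :=
    h.exists_fourierNorm_curvature_sub_circleMean_le hp hT hN (Nat.le_add_right 2 l)
  have hS : 0 < bracketSum := zero_lt_one.trans_le one_le_bracketSum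
  refine ⟨bracketSum * M, mul_pos hS hM, fun t ht0 htT => ?_⟩
  have hsmooth := h.smoothPeriodicFamily_curvature.smoothPeriodic ⟨ht0, htT⟩
  calc ClNorm l (fun θ => k θ t - circleMean (k · t))
      ≤ bracketSum * fourierNorm (2 + l) (fun θ => k θ t - circleMean (k · t)) :=
        (hsmooth.sub (.const _)).ClNorm_le_fourierNorm l
    _ ≤ bracketSum * (M * (T - t) ^ ((3 * (p : ℝ) - 2) / ((p : ℝ) + 1))) :=
        mul_le_mul_of_nonneg_left (hrate t ⟨ht0, htT⟩) hS.le
    _ = _ := (mul_assoc _ _ _).symm
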